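/- arXiv:1603.01891 — 2 statements merged into one kernel-verified Lean document; each statement's English description precedes it below -/
import Mathlib

section
/- Let 0<r<1, α>0 and β∈ℝ. Then for every integer n ≥ n₀(α,r,1) one has E_n(C^{α,r}_{β,1})_C = e^{-α n^r} n^{1-r} [ 1/(π α r) + γ_n · ( (αr)^{-2} n^{-r} + n^{-(1-r)} ) ], where the quantity γ_n = γ_n(α,r,β) satisfies |γ_n| ≤ (14π)². -/
open MeasureTheory Real Filter
open scoped ENNReal

/-- The generalized Poisson kernel `P_{α,r,β}(t) = Σ_{k=1}^∞ e^{-α k^r} cos(kt − βπ/2)`. -/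
noncomputable def genPoissonKernel (α r β : ℝ) (t : ℝ) : ℝ :=
  ∑' k : ℕ, Real.exp (-α * ((k : ℝ) + 1) ^ r) * Real.cos (((k : ℝ) + 1) * t - β * π / 2)

/-- Fourier cosine coefficient `a_k = (1/π)∫_{-π}^{π} f(t) cos(kt) dt`. -/
noncomputable def fourierCoefA (f : ℝ → ℝ) (k : ℕ) : ℝ :=
  (1 / π) * ∫ t in (-π)..π, f t * Real.cos (k * t)

/-- Fourier sine coefficient `b_k = (1/π)∫_{-π}^{π} f(t) sin(kt) dt`. -/
noncomputable def fourierCoefB (f : ℝ → ℝ) (k : ℕ) : ℝ :=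
  (1 / π) * ∫ t in (-π)..π, f t * Real.sin (k * t)

/-- Partial Fourier sum of order `m` of `f`. -/
noncomputable def fourierSum (m : ℕ) (f : ℝ → ℝ) (x : ℝ) : ℝ :=
  fourierCoefA f 0 / 2 +
    ∑ k ∈ Finset.Icc 1 m, (fourierCoefA f k * Real.cos (k * x) + fourierCoefB f k * Real.sin (k * x))

/-- The class `C^{α,r}_{β,p}` of generalized Poisson integrals. -/
def poissonClass (α r β : ℝ) (p : ℝ≥0∞) : Set (ℝ → ℝ) :=
  {f | (∀ x, f (x + 2 * π) = f x) ∧ ∃ a₀ : ℝ, ∃ φ : ℝ → ℝ,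
    (∀ x, φ (x + 2 * π) = φ x) ∧
    eLpNorm φ p (volume.restrict (Set.Ioc (0 : ℝ) (2 * π))) ≤ 1 ∧
    (∫ t in (0 : ℝ)..(2 * π), φ t) = 0 ∧
    ∀ x, f x = a₀ / 2 + (1 / π) * ∫ t in (-π)..π, genPoissonKernel α r β (x - t) * φ t}

/-- `E_n(C^{α,r}_{β,p})_C`: uniform deviation of Fourier sums of order `n-1` on the class. -/
noncomputable def EnC (α r β : ℝ) (p : ℝ≥0∞) (n : ℕ) : ℝ :=
  ⨆ f ∈ poissonClass α r β p, ⨆ x : ℝ, |f x - fourierSum (n - 1) f x|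

/-- `n₀(α,r,1)`: the smallest positive integer `n` with
`(1/(αr)) n^{-r} + αr n^{-(1-r)} ≤ 1/14`. -/
noncomputable def n₀one (α r : ℝ) : ℕ :=
  sInf {n : ℕ | 0 < n ∧
    1 / (α * r) * (n : ℝ) ^ (-r) + α * r * (n : ℝ) ^ (-(1 - r)) ≤ 1 / 14}


lemma aux_tele {b T : ℕ → ℝ} (hb : ∀ j, 0 ≤ b j) (hT : ∀ j, 0 ≤ T j)
    (h : ∀ j, b j ≤ T j - T (j+1)) : Summable b ∧ ∑' j, b j ≤ T 0 := by
  have key : ∀ N, ∑ i ∈ Finset.range N, b i ≤ T 0 := by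
    intro N
    calc ∑ i ∈ Finset.range N, b i ≤ ∑ i ∈ Finset.range N, (T i - T (i+1)) :=
          Finset.sum_le_sum (fun i _ => h i)
      _ = T 0 - T N := Finset.sum_range_sub' _ _
      _ ≤ T 0 := by linarith [hT N]
  exact ⟨summable_of_sum_range_le hb key, Real.tsum_le_of_sum_range_le hb key⟩

noncomputable def auxE (α r x : ℝ) : ℝ := Real.exp (-α * x ^ r)
noncomputable def auxF (α r x : ℝ) : ℝ := auxE α r x * x ^ (1 - r) / (α * r)
noncomputable def auxG (α r x : ℝ) : ℝ := auxE α r x * (x ^ (1 - r) / (α * r)) ^ 2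

lemma auxE_pos (α r x : ℝ) : 0 < auxE α r x := Real.exp_pos _

lemma auxE_anti {α r x y : ℝ} (hα : 0 < α) (hr : 0 < r) (hx : 0 ≤ x) (hxy : x ≤ y) :
    auxE α r y ≤ auxE α r x := by
  unfold auxE
  apply Real.exp_le_exp.2
  have := Real.rpow_le_rpow hx hxy hr.le
  nlinarith

lemma auxE_deriv {α r x : ℝ} (hx : 0 < x) :
    HasDerivAt (auxE α r) (-(α * r * x ^ (r - 1)) * auxE α r x) x := by
  have h := ((Real.hasDerivAt_rpow_const (x := x) (p := r) (Or.inl hx.ne')).const_mul (-α)).exp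
  unfold auxE
  convert h using 1
  ring

lemma auxQ_deriv {α r x : ℝ} (hα : 0 < α) (hr : 0 < r) (hx : 0 < x) :
    HasDerivAt (fun x => x ^ (1 - r) / (α * r)) ((1 - r) * (x ^ (-r) / (α * r))) x := by
  have h := (Real.hasDerivAt_rpow_const (x := x) (p := 1 - r) (Or.inl hx.ne')).div_const (α * r)
  refine h.congr_deriv ?_
  rw [show (1 - r - 1 : ℝ) = -r by ring]
  ring

lemma aux_pow_cancel {r x : ℝ} (hx : 0 < x) : x ^ (r - 1) * x ^ (1 - r) = 1 := by
  rw [← Real.rpow_add hx]; simp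

lemma auxF_deriv {α r x : ℝ} (hα : 0 < α) (hr : 0 < r) (hx : 0 < x) :
    HasDerivAt (auxF α r) (-(auxE α r x * (1 - (1 - r) * (x ^ (-r) / (α * r))))) x := by
  have h := (auxE_deriv (α := α) (r := r) hx).mul (auxQ_deriv hα hr hx)
  have e : auxF α r = fun x => auxE α r x * (x ^ (1 - r) / (α * r)) := by
    funext y; unfold auxF; ring
  rw [e]
  refine h.congr_deriv ?_
  have := aux_pow_cancel (r := r) hx
  have h2 : α * r * x ^ (r - 1) * (x ^ (1 - r) / (α * r)) = 1 := by
    field_simp; linarith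
  linear_combination -(auxE α r x) * h2

lemma auxG_deriv {α r x : ℝ} (hα : 0 < α) (hr : 0 < r) (hx : 0 < x) :
    HasDerivAt (auxG α r) (-(auxF α r x * (1 - 2 * (1 - r) * (x ^ (-r) / (α * r))))) x := by
  have h := (auxE_deriv (α := α) (r := r) hx).mul ((auxQ_deriv hα hr hx).pow 2)
  refine h.congr_deriv ?_
  have := aux_pow_cancel (r := r) hx
  have h2 : α * r * x ^ (r - 1) * (x ^ (1 - r) / (α * r)) = 1 := by
    field_simp; linarith
  simp only [auxF, Pi.pow_apply]
  push_cast
  linear_combination -(auxE α r x) * (x ^ (1 - r) / (α * r)) * h2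

lemma auxF_nonneg {α r x : ℝ} (hα : 0 < α) (hr : 0 < r) (hx : 0 < x) : 0 < auxF α r x := by
  unfold auxF
  have := auxE_pos α r x
  positivity

lemma auxG_nonneg {α r x : ℝ} : 0 ≤ auxG α r x := by
  unfold auxG
  have := auxE_pos α r x
  positivity

lemma aux_w {α r m x : ℝ} (hα : 0 < α) (hr : 0 < r) (hm : 0 < m) (hx : m ≤ x) :
    x ^ (-r) / (α * r) ≤ m ^ (-r) / (α * r) := by
  have : x ^ (-r) ≤ m ^ (-r) := Real.rpow_le_rpow_of_nonpos hm hx (by linarith)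
  gcongr

/-- First telescoping bound. -/
lemma aux_step1 {α r m X x : ℝ} (hα : 0 < α) (hr : 0 < r) (hr1 : r < 1) (hm : 0 < m)
    (hX : X = m ^ (-r) / (α * r)) (hX1 : X ≤ 1/14) (hx : m ≤ x) :
    (1 - X) * auxE α r (x+1) ≤ auxF α r x - auxF α r (x+1) ∧
      auxF α r x - auxF α r (x+1) ≤ auxE α r x := by
  obtain ⟨c, hc, h⟩ := exists_hasDerivAt_eq_slope (auxF α r)
    (fun x => -(auxE α r x * (1 - (1 - r) * (x ^ (-r) / (α * r))))) (a := x) (b := x+1) (by linarith)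
    (fun y hy => (auxF_deriv hα hr (by linarith [hy.1])).continuousAt.continuousWithinAt)
    (fun y hy => auxF_deriv hα hr (by linarith [hy.1]))
  have hc0 : 0 < c := by linarith [hc.1]
  have hw := aux_w (x := c) hα hr hm (by linarith [hc.1])
  have hw0 : 0 ≤ c ^ (-r) / (α * r) := by positivity
  rw [← hX] at hw
  have e : auxF α r x - auxF α r (x+1) = auxE α r c * (1 - (1 - r) * (c ^ (-r) / (α * r))) := by
    simp at h; linarith
  rw [e]
  have h1 := auxE_anti (x := c) (y := x+1) hα hr hc0.le hc.2.le
  have h2 := auxE_anti (x := x) (y := c) hα hr (by linarith) hc.1.le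
  have := auxE_pos α r c
  have := auxE_pos α r (x+1)
  set w := c ^ (-r) / (α * r)
  have h3 : (1-r) * w ≤ w := by nlinarith
  have h4 : 0 ≤ (1-r) * w := by apply mul_nonneg <;> linarith
  constructor
  · rw [mul_comm]
    apply mul_le_mul h1 <;> linarith
  · nlinarith

noncomputable def auxH (α r m x : ℝ) : ℝ := 2 * ((x - m) * auxF α r x) + 4 * auxG α r x

lemma aux_step2 {α r m X x : ℝ} (hα : 0 < α) (hr : 0 < r) (hr1 : r < 1) (hm : 0 < m)
    (hX : X = m ^ (-r) / (α * r)) (hX1 : X ≤ 1/14) (hx : m ≤ x) :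
    (x - m) * auxE α r (x+1) ≤ auxH α r m x - auxH α r m (x+1) := by
  have hd : ∀ y, m ≤ y → HasDerivAt (auxH α r m)
      (2 * (1 * auxF α r y + (y - m) * (-(auxE α r y * (1 - (1 - r) * (y ^ (-r) / (α * r))))))
        + 4 * (-(auxF α r y * (1 - 2 * (1 - r) * (y ^ (-r) / (α * r)))))) y := by
    intro y hy
    have hy0 : 0 < y := by linarith
    exact ((((hasDerivAt_id y).sub_const m).mul (auxF_deriv hα hr hy0)).const_mul 2).add
      ((auxG_deriv hα hr hy0).const_mul 4)
  obtain ⟨c, hc, h⟩ := exists_hasDerivAt_eq_slope (auxH α r m) _ (a := x) (b := x+1) (by linarith)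
    (fun y hy => (hd y (by linarith [hy.1])).continuousAt.continuousWithinAt)
    (fun y hy => hd y (by linarith [hy.1]))
  have hc0 : 0 < c := by linarith [hc.1]
  have hw := aux_w (x := c) hα hr hm (by linarith [hc.1])
  have hw0 : 0 ≤ c ^ (-r) / (α * r) := by positivity
  rw [← hX] at hw
  have h1 := auxE_anti (x := c) (y := x+1) hα hr hc0.le hc.2.le
  have := auxE_pos α r c
  have := auxE_pos α r (x+1)
  have hF := auxF_nonneg hα hr hc0
  set w := c ^ (-r) / (α * r)
  have h3 : (1-r) * w ≤ w := by nlinarith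
  have e : auxH α r m x - auxH α r m (x+1) =
      2 * ((c - m) * auxE α r c) * (1 - (1-r) * w) + auxF α r c * (2 - 8 * ((1 - r) * w)) := by
    simp only [add_sub_cancel_left, div_one] at h
    linear_combination h
  rw [e]
  have hcm : 0 ≤ c - m := by linarith [hc.1]
  have h5 : 0 ≤ auxF α r c * (2 - 8 * ((1 - r) * w)) := mul_nonneg hF.le (by linarith)
  have h6 : (x - m) * auxE α r (x+1) ≤ (c - m) * auxE α r c :=
    mul_le_mul (by linarith [hc.1]) h1 (by linarith) hcm
  have h7 : 0 ≤ (c - m) * auxE α r c := by positivity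
  nlinarith

lemma auxF_tendsto {α r : ℝ} (hα : 0 < α) (hr : 0 < r) :
    Tendsto (auxF α r) atTop (nhds 0) := by
  have h1 := (isLittleO_rpow_exp_pos_mul_atTop ((1 - r) / r) hα)
  have h2 := h1.tendsto_div_nhds_zero
  have h3 := h2.comp (tendsto_rpow_atTop hr)
  have h4 := h3.div_const (α * r)
  rw [zero_div] at h4
  refine h4.congr' ?_
  filter_upwards [eventually_gt_atTop 0] with x hx
  simp only [Function.comp, auxF, auxE]
  rw [← Real.rpow_mul hx.le, mul_div_cancel₀ _ hr.ne', neg_mul, Real.exp_neg]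
  field_simp

structure AuxEst (α r : ℝ) (n : ℕ) : Prop where
  sumE : Summable (fun j : ℕ => auxE α r (n + j))
  sumM : Summable (fun j : ℕ => (j : ℝ) * auxE α r (n + j))
  lo : auxF α r n ≤ ∑' j : ℕ, auxE α r (n + j)
  hi : ∑' j : ℕ, auxE α r (n + j) ≤
    auxF α r n * (1 + 2 * ((n:ℝ) ^ (-r) / (α * r)) + α * r * (n:ℝ) ^ (-(1 - r)))
  mom : ∑' j : ℕ, (j : ℝ) * auxE α r (n + j) ≤
    5 * auxF α r n * (n * ((n:ℝ) ^ (-r) / (α * r)))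

lemma aux_est {α r : ℝ} {n : ℕ} (hα : 0 < α) (hr : 0 < r) (hr1 : r < 1) (hn : 0 < n)
    (h : 1 / (α * r) * (n : ℝ) ^ (-r) + α * r * (n : ℝ) ^ (-(1 - r)) ≤ 1 / 14) :
    AuxEst α r n := by
  have hm : (0:ℝ) < n := by exact_mod_cast hn
  set X := (n:ℝ) ^ (-r) / (α * r) with hX
  set Y := α * r * (n:ℝ) ^ (-(1 - r)) with hY
  have hXp : 0 < X := by positivity
  have hYp : 0 < Y := by positivity
  have hXY : X + Y ≤ 1/14 := by rw [hX]; convert h using 2; ring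
  have hX1 : X ≤ 1/14 := by linarith
  have hXYn : n * X * Y = 1 := by
    rw [hX, hY]
    have : (n:ℝ) * ((n:ℝ) ^ (-r) * (n:ℝ) ^ (-(1-r))) = 1 := by
      rw [← Real.rpow_add hm, show -r + -(1-r) = -1 by ring, Real.rpow_neg_one]
      field_simp
    field_simp
    linarith
  have hQ : (n:ℝ) ^ (1 - r) / (α * r) = n * X := by
    rw [hX, sub_eq_add_neg, Real.rpow_add hm, Real.rpow_one]; ring
  have hFn : auxF α r n = auxE α r n * (n * X) := by
    unfold auxF; rw [← hQ]; ring
  have hGn : auxG α r n = auxF α r n * (n * X) := by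
    unfold auxG; rw [hQ, hFn]; ring
  have hEn : auxE α r n = auxF α r n * Y := by rw [hFn]; linear_combination -(auxE α r n) * hXYn
  have hFp := auxF_nonneg hα hr hm
  have hj : ∀ j : ℕ, (n:ℝ) ≤ n + j := fun j => by linarith [(Nat.cast_nonneg j : (0:ℝ) ≤ j)]
  have s1 := fun j : ℕ => aux_step1 hα hr hr1 hm hX hX1 (hj j)
  have s2 := fun j : ℕ => aux_step2 hα hr hr1 hm hX hX1 (hj j)
  have t1 := aux_tele (b := fun j : ℕ => (1 - X) * auxE α r (n + j + 1))
    (T := fun j : ℕ => auxF α r (n + j)) (fun j => mul_nonneg (by linarith) (auxE_pos _ _ _).le)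
    (fun j => (auxF_nonneg hα hr (by linarith [hj j])).le) (fun j => by
      have := (s1 j).1; push_cast; rw [← add_assoc]; exact this)
  have t2 := aux_tele (b := fun j : ℕ => (j:ℝ) * auxE α r (n + j + 1))
    (T := fun j : ℕ => auxH α r n (n + j)) (fun j => mul_nonneg (Nat.cast_nonneg j) (auxE_pos _ _ _).le)
    (fun j => by
      have h1 := (auxF_nonneg (α := α) (r := r) (x := n + j) hα hr (by linarith [hj j])).le
      have h2 := auxG_nonneg (α := α) (r := r) (x := n + j)
      have : (0:ℝ) ≤ n + j - n := by linarith [hj j]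
      unfold auxH; positivity)
    (fun j => by
      have := (s2 j); push_cast; rw [← add_assoc]; simpa using this)
  simp only [Nat.cast_zero, add_zero] at t1 t2
  have h1X : (0:ℝ) < 1 - X := by linarith
  have sE1 : Summable (fun j : ℕ => auxE α r (n + j + 1)) :=
    (summable_mul_left_iff h1X.ne').1 t1.1
  have sE : Summable (fun j : ℕ => auxE α r (n + j)) := by
    rw [← summable_nat_add_iff 1]
    refine sE1.congr fun j => ?_
    push_cast; rw [add_assoc]
  have eS : ∑' j : ℕ, auxE α r (n + j) = auxE α r n + ∑' j : ℕ, auxE α r (n + j + 1) := by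
    rw [sE.tsum_eq_zero_add]
    simp [add_assoc]
  have b1 : (1 - X) * ∑' j : ℕ, auxE α r (n + j + 1) ≤ auxF α r n := by
    rw [← tsum_mul_left]; exact t1.2
  set S1 := ∑' j : ℕ, auxE α r (n + j + 1) with hS1
  have b2 : S1 ≤ auxF α r n * (1 + 2 * X) := by
    have : (1:ℝ) ≤ (1 - X) * (1 + 2 * X) := by nlinarith
    have : (1 - X) * S1 ≤ (1 - X) * (auxF α r n * (1 + 2 * X)) := by nlinarith
    exact le_of_mul_le_mul_left this h1X
  have sM1 : Summable (fun j : ℕ => ((j+1:ℕ) : ℝ) * auxE α r (n + (j+1:ℕ))) := by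
    refine (t2.1.add sE1).congr fun j => ?_
    push_cast; rw [← add_assoc]; ring
  have sM : Summable (fun j : ℕ => (j : ℝ) * auxE α r (n + j)) := by
    rw [← summable_nat_add_iff 1]
    exact sM1
  refine ⟨sE, sM, ?_, ?_, ?_⟩
  · have hl : ∀ N : ℕ, auxF α r n - auxF α r (n + N) ≤ ∑' j : ℕ, auxE α r (n + j) := by
      intro N
      calc auxF α r n - auxF α r (n + N)
          = ∑ j ∈ Finset.range N, (auxF α r (n + j) - auxF α r (n + (j+1:ℕ))) := by
            rw [Finset.sum_range_sub' (fun j : ℕ => auxF α r (n + j))]; simp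
        _ ≤ ∑ j ∈ Finset.range N, auxE α r (n + j) := by
            apply Finset.sum_le_sum
            intro j _
            have := (s1 j).2
            push_cast; rw [← add_assoc]; exact this
        _ ≤ _ := sE.sum_le_tsum _ (fun j _ => (auxE_pos _ _ _).le)
    have ht : Tendsto (fun N : ℕ => auxF α r n - auxF α r (n + N)) atTop (nhds (auxF α r n - 0)) := by
      apply Tendsto.sub tendsto_const_nhds
      apply (auxF_tendsto hα hr).comp
      exact tendsto_atTop_add_const_left _ _ tendsto_natCast_atTop_atTop
    rw [sub_zero] at ht
    exact le_of_tendsto' ht hl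
  · rw [eS, hEn]; linarith
  · rw [sM.tsum_eq_zero_add]
    have : ∑' j : ℕ, ((j+1:ℕ) : ℝ) * auxE α r (n + (j+1:ℕ)) =
        ∑' j : ℕ, (j:ℝ) * auxE α r (n + j + 1) + S1 := by
      rw [hS1, ← t2.1.tsum_add sE1]
      congr 1; funext j
      push_cast; rw [← add_assoc]; ring
    rw [this]
    have h2 := t2.2
    have hH : auxH α r n n = 4 * (auxF α r n * (n * X)) := by
      unfold auxH; rw [hGn]; simp
    rw [hH] at h2
    have h3 : S1 ≤ auxF α r n * (n * X) := by
      have : 1 + 2 * X ≤ n * X := by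
        have h8 : 0 < n * X := by positivity
        nlinarith
      nlinarith
    simp only [Nat.cast_zero, zero_mul, zero_add]
    linarith

lemma aux_cos_int (m : ℤ) (c : ℝ) :
    ∫ x in (-π)..π, Real.cos (m * x - c) = if m = 0 then 2 * π * Real.cos c else 0 := by
  split_ifs with h
  · subst h; simp only [Int.cast_zero, zero_mul, zero_sub, Real.cos_neg, intervalIntegral.integral_const, smul_eq_mul]; ring
  · have hm : (m:ℝ) ≠ 0 := by exact_mod_cast h
    rw [intervalIntegral.integral_comp_mul_sub (fun y => Real.cos y) hm c, integral_cos]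
    have : Real.sin (m * π - c) = Real.sin (m * -π - c) := by
      rw [show (m:ℝ) * π - c = (m * -π - c) + m * (2 * π) by ring, Real.sin_add_int_mul_two_pi]
    rw [this]; simp

lemma aux_orth (k j : ℕ) (hk : 0 < k) (c d : ℝ) :
    ∫ x in (-π)..π, Real.cos (k * x - c) * Real.cos (j * x - d) =
      if k = j then π * Real.cos (c - d) else 0 := by
  have e : ∀ x : ℝ, Real.cos (k * x - c) * Real.cos (j * x - d) =
      (1/2) * Real.cos (((k + j : ℤ) : ℝ) * x - (c + d))
        + (1/2) * Real.cos (((k - j : ℤ) : ℝ) * x - (c - d)) := by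
    intro x
    push_cast
    rw [show ((k:ℝ) + j) * x - (c + d) = (k * x - c) + (j * x - d) by ring,
      show ((k:ℝ) - j) * x - (c - d) = (k * x - c) - (j * x - d) by ring,
      Real.cos_add (k * x - c), Real.cos_sub (k * x - c)]
    ring
  simp_rw [e]
  rw [intervalIntegral.integral_add (by apply Continuous.intervalIntegrable; fun_prop)
    (by apply Continuous.intervalIntegrable; fun_prop),
    intervalIntegral.integral_const_mul, intervalIntegral.integral_const_mul,
    aux_cos_int, aux_cos_int, if_neg (by omega)]
  by_cases h : k = j
  · rw [if_pos (by omega), if_pos h]; ring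
  · rw [if_neg (by omega), if_neg h]; ring

lemma aux_coef (f : ℝ → ℝ) (c0 : ℝ) (u v : ℕ → ℝ) (hu : Summable (fun k => |u k|))
    (hv : Summable (fun k => |v k|))
    (hf : ∀ x, f x = c0 + ∑' k : ℕ, (u k * Real.cos ((k + 1 : ℕ) * x - 0)
      + v k * Real.cos ((k + 1 : ℕ) * x - π / 2))) (j : ℕ) (d : ℝ) :
    ∫ x in (-π)..π, f x * Real.cos (j * x - d) =
      c0 * (if j = 0 then 2 * π * Real.cos d else 0) +
      (if j = 0 then 0 else π * (u (j - 1) * Real.cos d + v (j - 1) * Real.sin d)) := by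
  set g : ℕ → ℝ → ℝ := fun k x => (u k * Real.cos ((k + 1 : ℕ) * x - 0)
      + v k * Real.cos ((k + 1 : ℕ) * x - π / 2)) with hg
  have hgb : ∀ k x, |g k x| ≤ |u k| + |v k| := by
    intro k x
    refine (abs_add_le _ _).trans ?_
    rw [abs_mul, abs_mul]
    gcongr
    · exact mul_le_of_le_one_right (abs_nonneg _) (Real.abs_cos_le_one _)
    · exact mul_le_of_le_one_right (abs_nonneg _) (Real.abs_cos_le_one _)
  have hgs : ∀ x, Summable (fun k => g k x) := fun x =>
    Summable.of_norm_bounded (hu.add hv) (fun k => hgb k x)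
  have hgc : ∀ k, Continuous (g k) := by intro k; simp only [hg]; fun_prop
  have hs := intervalIntegral.hasSum_integral_of_dominated_convergence (μ := volume) (a := -π) (b := π)
    (F := fun k x => g k x * Real.cos (j * x - d))
    (f := fun x => (∑' k, g k x) * Real.cos (j * x - d))
    (fun k _ => |u k| + |v k|)
    (fun k => ((hgc k).mul (by fun_prop)).aestronglyMeasurable)
    (fun k => Filter.Eventually.of_forall fun x _ => by
      rw [norm_mul]
      exact (mul_le_of_le_one_right (norm_nonneg _) (Real.abs_cos_le_one _)).trans (hgb k x))
    (Filter.Eventually.of_forall fun x _ => hu.add hv)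
    (by simp)
    (Filter.Eventually.of_forall fun x _ => (hgs x).hasSum.mul_right _)
  have hterm : ∀ k, ∫ x in (-π)..π, g k x * Real.cos (j * x - d) =
      if k + 1 = j then π * (u k * Real.cos d + v k * Real.sin d) else 0 := by
    intro k
    have e : ∀ x, g k x * Real.cos (j * x - d) =
      u k * (Real.cos ((k + 1 : ℕ) * x - 0) * Real.cos (j * x - d)) +
      v k * (Real.cos ((k + 1 : ℕ) * x - π / 2) * Real.cos (j * x - d)) := by
      intro x; simp only [hg]; ring
    simp_rw [e]
    rw [intervalIntegral.integral_add (by apply Continuous.intervalIntegrable; fun_prop)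
      (by apply Continuous.intervalIntegrable; fun_prop),
      intervalIntegral.integral_const_mul, intervalIntegral.integral_const_mul,
      aux_orth _ _ (Nat.succ_pos k), aux_orth _ _ (Nat.succ_pos k)]
    split_ifs
    · rw [zero_sub, Real.cos_neg, Real.cos_pi_div_two_sub]; ring
    · simp
  simp_rw [hterm] at hs
  have hint : IntervalIntegrable (fun x => (∑' k, g k x) * Real.cos (j * x - d)) volume (-π) π := by
    apply Continuous.intervalIntegrable
    exact (continuous_tsum hgc (hu.add hv) hgb).mul (by fun_prop)
  have e2 : ∀ x, f x * Real.cos (j * x - d) =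
      c0 * Real.cos ((j:ℤ) * x - d) + (∑' k, g k x) * Real.cos (j * x - d) := by
    intro x; rw [hf x, Int.cast_natCast, add_mul]
  simp_rw [e2]
  rw [intervalIntegral.integral_add (by apply Continuous.intervalIntegrable; fun_prop) hint,
    intervalIntegral.integral_const_mul, aux_cos_int, ← hs.tsum_eq]
  congr 1
  · simp
  · rcases j with _ | j
    · simp
    · rw [tsum_eq_single j]
      · simp
      · intro b hb
        rw [if_neg (by omega)]

lemma aux_rep {α r β : ℝ} (hs : Summable (fun k : ℕ => auxE α r (k + 1))) (φ : ℝ → ℝ)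
    (hφ : IntervalIntegrable φ volume (-π) π) (x : ℝ) :
    HasSum (fun k : ℕ => auxE α r (k + 1) * ∫ t in (-π)..π, Real.cos ((k + 1 : ℕ) * (x - t) - β * π / 2) * φ t)
      (∫ t in (-π)..π, genPoissonKernel α r β (x - t) * φ t) := by
  have hb : ∀ (k : ℕ) (t : ℝ), |auxE α r (k + 1) * Real.cos ((k + 1 : ℕ) * (x - t) - β * π / 2)| ≤ auxE α r (k+1) := by
    intro k t
    rw [abs_mul, abs_of_pos (auxE_pos _ _ _)]
    exact mul_le_of_le_one_right (auxE_pos _ _ _).le (Real.abs_cos_le_one _)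
  have h := intervalIntegral.hasSum_integral_of_dominated_convergence (μ := volume) (a := -π) (b := π)
    (F := fun (k : ℕ) t => (auxE α r (k + 1) * Real.cos ((k + 1 : ℕ) * (x - t) - β * π / 2)) * φ t)
    (f := fun t => genPoissonKernel α r β (x - t) * φ t)
    (fun k t => auxE α r (k+1) * |φ t|)
    (fun k => by
      refine AEStronglyMeasurable.mul ?_ hφ.def'.aestronglyMeasurable
      apply Continuous.aestronglyMeasurable; fun_prop)
    (fun k => Filter.Eventually.of_forall fun t _ => by
      rw [norm_mul]
      exact mul_le_mul_of_nonneg_right (hb k t) (norm_nonneg _))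
    (Filter.Eventually.of_forall fun t _ => hs.mul_right _)
    (by simp_rw [tsum_mul_right]; exact hφ.abs.const_mul _)
    (Filter.Eventually.of_forall fun t _ => by
      apply HasSum.mul_right
      have := (Summable.of_norm_bounded (f := fun k : ℕ => auxE α r (k + 1) * Real.cos ((k + 1 : ℕ) * (x - t) - β * π / 2)) hs (fun k => hb k t)).hasSum
      have e : genPoissonKernel α r β (x - t) = ∑' k : ℕ,
          auxE α r (k + 1) * Real.cos ((k + 1 : ℕ) * (x - t) - β * π / 2) := by
        unfold genPoissonKernel auxE
        push_cast; rfl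
      rw [e]; exact this)
  refine h.congr_fun ?_ |> fun h => h
  intro k
  rw [← intervalIntegral.integral_const_mul]
  congr 1; funext t; ring

lemma aux_abs_int_le (φ g : ℝ → ℝ) (hφ : IntervalIntegrable φ volume (-π) π)
    (hg : ∀ t, |g t| ≤ 1) :
    |∫ t in (-π)..π, g t * φ t| ≤ ∫ t in (-π)..π, |φ t| := by
  have := intervalIntegral.norm_integral_le_of_norm_le (μ := volume) (a := -π) (b := π)
    (f := fun t => g t * φ t) (g := fun t => |φ t|) (by linarith [Real.pi_pos])
    (Filter.Eventually.of_forall fun t _ => by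
      rw [norm_mul]; exact mul_le_of_le_one_left (norm_nonneg _) (hg t)) hφ.abs
  exact this

lemma aux_dev {α r β : ℝ} (hs : Summable (fun k : ℕ => auxE α r (k + 1))) (φ : ℝ → ℝ)
    (hφ : IntervalIntegrable φ volume (-π) π) (f : ℝ → ℝ) (a₀ : ℝ)
    (hf : ∀ x, f x = a₀ / 2 + (1 / π) * ∫ t in (-π)..π, genPoissonKernel α r β (x - t) * φ t)
    (m : ℕ) (x : ℝ) :
    f x - fourierSum m f x = (1 / π) * ∑' j : ℕ, auxE α r ((m + 1 : ℕ) + j) *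
      ∫ t in (-π)..π, Real.cos (((m + 1 : ℕ) + j) * (x - t) - β * π / 2) * φ t := by
  set I := ∫ t in (-π)..π, |φ t|
  set C : ℕ → ℝ := fun k => ∫ t in (-π)..π, Real.cos ((k + 1 : ℕ) * t + β * π / 2) * φ t with hC
  set D : ℕ → ℝ := fun k => ∫ t in (-π)..π, Real.sin ((k + 1 : ℕ) * t + β * π / 2) * φ t with hD
  set u : ℕ → ℝ := fun k => (1 / π) * (auxE α r (k+1) * C k) with hu
  set v : ℕ → ℝ := fun k => (1 / π) * (auxE α r (k+1) * D k) with hv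
  have hI : 0 ≤ I := intervalIntegral.integral_nonneg (by linarith [Real.pi_pos]) (fun _ _ => abs_nonneg _)
  have hub : Summable (fun k => |u k|) := by
    refine Summable.of_norm_bounded ((hs.mul_right I).mul_left (1/π)) fun k => ?_
    simp only [hu, Real.norm_eq_abs, abs_abs]
    rw [abs_mul, abs_mul, abs_of_pos (auxE_pos _ _ _), abs_of_pos (by positivity)]
    have := auxE_pos α r (k+1)
    gcongr
    exact aux_abs_int_le φ _ hφ (fun t => Real.abs_cos_le_one _)
  have hvb : Summable (fun k => |v k|) := by
    refine Summable.of_norm_bounded ((hs.mul_right I).mul_left (1/π)) fun k => ?_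
    simp only [hv, Real.norm_eq_abs, abs_abs]
    rw [abs_mul, abs_mul, abs_of_pos (auxE_pos _ _ _), abs_of_pos (by positivity)]
    have := auxE_pos α r (k+1)
    gcongr
    exact aux_abs_int_le φ _ hφ (fun t => Real.abs_sin_le_one _)
  have hcd : ∀ (k : ℕ) (y : ℝ),
      (1 / π) * (auxE α r (k + 1) * ∫ t in (-π)..π, Real.cos ((k + 1 : ℕ) * (y - t) - β * π / 2) * φ t)
      = u k * Real.cos ((k + 1 : ℕ) * y) + v k * Real.sin ((k + 1 : ℕ) * y) := by
    intro k y
    have e : ∫ t in (-π)..π, Real.cos ((k + 1 : ℕ) * (y - t) - β * π / 2) * φ t =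
        Real.cos ((k + 1 : ℕ) * y) * C k + Real.sin ((k + 1 : ℕ) * y) * D k := by
      rw [hC, hD]
      simp only []
      rw [← intervalIntegral.integral_const_mul, ← intervalIntegral.integral_const_mul,
        ← intervalIntegral.integral_add]
      · congr 1; funext t
        rw [show ((k + 1 : ℕ):ℝ) * (y - t) - β * π / 2 = (k + 1 : ℕ) * y - ((k + 1 : ℕ) * t + β * π / 2) by ring,
          Real.cos_sub]
        ring
      · apply IntervalIntegrable.const_mul
        exact hφ.continuousOn_mul (by fun_prop)
      · apply IntervalIntegrable.const_mul
        exact hφ.continuousOn_mul (by fun_prop)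
    rw [e]; simp only [hu, hv]; ring
  have hsum : ∀ y, HasSum (fun k => u k * Real.cos ((k + 1 : ℕ) * y) + v k * Real.sin ((k + 1 : ℕ) * y))
      ((1 / π) * ∫ t in (-π)..π, genPoissonKernel α r β (y - t) * φ t) := by
    intro y
    have := (aux_rep (β := β) hs φ hφ y).mul_left (1/π)
    simp_rw [hcd] at this
    exact this
  have hf2 : ∀ y, f y = a₀ / 2 + ∑' k : ℕ, (u k * Real.cos ((k + 1 : ℕ) * y - 0)
      + v k * Real.cos ((k + 1 : ℕ) * y - π / 2)) := by
    intro y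
    rw [hf y, ← (hsum y).tsum_eq]
    simp only [sub_zero, Real.cos_sub_pi_div_two]
  have hco := aux_coef f (a₀/2) u v hub hvb hf2
  have hA0 : fourierCoefA f 0 = a₀ := by
    unfold fourierCoefA
    have := hco 0 0
    simp only [sub_zero] at this
    rw [this]; simp; field_simp
  have hA : ∀ k, fourierCoefA f (k+1) = u k := by
    intro k
    unfold fourierCoefA
    have := hco (k+1) 0
    simp only [sub_zero] at this
    rw [this]; simp
  have hB : ∀ k, fourierCoefB f (k+1) = v k := by
    intro k
    unfold fourierCoefB
    have := hco (k+1) (π/2)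
    simp only [Real.cos_sub_pi_div_two] at this
    rw [this]; simp
  have hS : fourierSum m f x = a₀ / 2 + ∑ k ∈ Finset.range m,
      (u k * Real.cos ((k + 1 : ℕ) * x) + v k * Real.sin ((k + 1 : ℕ) * x)) := by
    unfold fourierSum
    rw [hA0]
    congr 1
    rw [Finset.range_eq_Ico, ← Finset.Ico_add_one_right_eq_Icc,
      Finset.sum_Ico_eq_sum_range, Finset.sum_Ico_eq_sum_range]
    apply Finset.sum_congr (by simp)
    intro k _
    rw [add_comm 1 k, hA, hB, zero_add]
  rw [hS, hf x, ← (hsum x).tsum_eq, ← (hsum x).summable.sum_add_tsum_nat_add m, ← tsum_mul_left]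
  rw [add_sub_add_left_eq_sub, add_sub_cancel_left]
  congr 1; funext j
  rw [← hcd]
  push_cast
  rw [show (j:ℝ) + m + 1 = m + 1 + j by ring]

def AuxMom (a : ℕ → ℝ) : Prop :=
  ∀ (N : ℕ) (c : ℕ → ℂ) (B : ℝ),
    (∀ x ∈ Set.Icc (0:ℝ) 1, ‖∑ k ∈ Finset.range N, c k * (x:ℂ) ^ k‖ ≤ B) →
    ‖∑ k ∈ Finset.range N, c k * (a k : ℂ)‖ ≤ B

lemma auxMom_pt {y : ℝ} (hy : y ∈ Set.Icc (0:ℝ) 1) : AuxMom (fun k => y ^ k) := by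
  intro N c B h
  have := h y hy
  push_cast
  exact this

lemma auxMom_one : AuxMom (fun _ => 1) := by
  have := auxMom_pt (y := 1) (by simp)
  simpa using this

lemma auxMom_mul {a b : ℕ → ℝ} (ha : AuxMom a) (hb : AuxMom b) : AuxMom (fun k => a k * b k) := by
  intro N c B h
  have := ha N (fun k => c k * b k) B ?_
  · convert this using 3
    push_cast; ring
  · intro x hx
    have := hb N (fun k => c k * (x:ℂ) ^ k) B ?_
    · convert this using 3
      ring
    · intro y hy
      have := h (x * y) ⟨mul_nonneg hx.1 hy.1, mul_le_one₀ hx.2 hy.1 hy.2⟩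
      convert this using 3
      push_cast; rw [mul_pow]; ring

lemma auxMom_pow {a : ℕ → ℝ} (ha : AuxMom a) (m : ℕ) : AuxMom (fun k => a k ^ m) := by
  induction m with
  | zero => simpa using auxMom_one
  | succ m ih => simpa only [pow_succ] using auxMom_mul ih ha

lemma auxMom_conv {a b : ℕ → ℝ} (ha : AuxMom a) (hb : AuxMom b) {s t : ℝ} (hs : 0 ≤ s) (ht : 0 ≤ t)
    (hst : s + t = 1) : AuxMom (fun k => s * a k + t * b k) := by
  intro N c B h
  have h1 := ha N c B h
  have h2 := hb N c B h
  have e : ∑ k ∈ Finset.range N, c k * ((s * a k + t * b k : ℝ) : ℂ) =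
      (s:ℂ) * ∑ k ∈ Finset.range N, c k * (a k : ℂ) + (t:ℂ) * ∑ k ∈ Finset.range N, c k * (b k : ℂ) := by
    rw [Finset.mul_sum, Finset.mul_sum, ← Finset.sum_add_distrib]
    apply Finset.sum_congr rfl
    intro k _
    push_cast; ring
  rw [e]
  refine (norm_add_le _ _).trans ?_
  rw [norm_mul, norm_mul, Complex.norm_real, Complex.norm_real, Real.norm_of_nonneg hs,
    Real.norm_of_nonneg ht]
  have h3 := mul_le_mul_of_nonneg_left h1 hs
  have h4 := mul_le_mul_of_nonneg_left h2 ht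
  have h5 : s * B + t * B = B := by rw [← add_mul, hst, one_mul]
  linarith

lemma auxMom_lim {ι : Type*} {l : Filter ι} [l.NeBot] {a : ι → ℕ → ℝ} {b : ℕ → ℝ}
    (h : ∀ᶠ i in l, AuxMom (a i)) (hl : ∀ k, Tendsto (fun i => a i k) l (nhds (b k))) : AuxMom b := by
  intro N c B hB
  have ht : Tendsto (fun i => ‖∑ k ∈ Finset.range N, c k * (a i k : ℂ)‖) l
      (nhds ‖∑ k ∈ Finset.range N, c k * (b k : ℂ)‖) := by
    apply Tendsto.norm
    apply tendsto_finsetSum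
    intro k _
    exact tendsto_const_nhds.mul ((Complex.continuous_ofReal.tendsto _).comp (hl k))
  exact le_of_tendsto ht (h.mono fun i hi => hi N c B hB)

lemma auxMom_mix {ν : Measure ℝ} {w : ℝ → ℝ} {b : ℝ → ℕ → ℝ} (hw : Integrable w ν)
    (hw0 : ∀ᵐ y ∂ν, 0 ≤ w y) (hw1 : ∫ y, w y ∂ν = 1) (hb : ∀ k, Integrable (fun y => w y * b y k) ν)
    (hm : ∀ᵐ y ∂ν, AuxMom (b y)) : AuxMom (fun k => ∫ y, w y * b y k ∂ν) := by
  intro N c B h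
  have e : ∑ k ∈ Finset.range N, c k * ((∫ y, w y * b y k ∂ν : ℝ) : ℂ) =
      ∫ y, (∑ k ∈ Finset.range N, c k * ((w y * b y k : ℝ) : ℂ)) ∂ν := by
    rw [integral_finsetSum]
    · apply Finset.sum_congr rfl
      intro k _
      rw [integral_const_mul]; congr 1; exact integral_ofReal.symm
    · intro k _
      exact ((hb k).ofReal).const_mul _
  rw [e]
  have := norm_integral_le_of_norm_le (μ := ν) (f := fun y => (∑ k ∈ Finset.range N, c k * ((w y * b y k : ℝ) : ℂ)))
    (hw.mul_const B) (by
      filter_upwards [hw0, hm] with y h0 h1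
      have e2 : ∑ k ∈ Finset.range N, c k * ((w y * b y k : ℝ) : ℂ) =
          (w y : ℂ) * ∑ k ∈ Finset.range N, c k * (b y k : ℂ) := by
        rw [Finset.mul_sum]
        apply Finset.sum_congr rfl
        intro k _
        push_cast; ring
      rw [e2, norm_mul, Complex.norm_real, Real.norm_of_nonneg h0]
      exact mul_le_mul_of_nonneg_left (h1 N c B h) h0)
  rwa [integral_mul_const, hw1, one_mul] at this

lemma auxMom_exp {b : ℕ → ℝ} (hb : AuxMom b) {l : ℝ} (hl : 0 ≤ l) :
    AuxMom (fun k => Real.exp (-(l * (1 - b k)))) := by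
  refine auxMom_lim (l := atTop) (a := fun m : ℕ => fun k => (1 + (-(l * (1 - b k))) / m) ^ m) ?_ ?_
  · filter_upwards [eventually_ge_atTop (⌈l⌉₊ + 1)] with m hm
    apply auxMom_pow (a := fun k => (1 + (-(l * (1 - b k))) / m))
    have hm1 : l ≤ m := (Nat.le_ceil l).trans (by exact_mod_cast (by omega : ⌈l⌉₊ ≤ m))
    have hm0 : (0:ℝ) < m := by exact_mod_cast (by omega : 0 < m)
    have := auxMom_conv auxMom_one hb (s := 1 - l / m) (t := l / m)
      (by rw [sub_nonneg, div_le_one hm0]; exact hm1) (by positivity) (by ring)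
    convert this using 2 with k
    ring
  · intro k
    exact Real.tendsto_one_add_div_pow_exp _

lemma auxMom_stieltjes {t : ℝ} (ht : 0 < t) : AuxMom (fun k : ℕ => t / (t + k)) := by
  have hi : ∀ k : ℕ, ∫ y in Set.Ioc (0:ℝ) 1, (t * y ^ (t - 1)) * y ^ k = t / (t + k) := by
    intro k
    rw [← intervalIntegral.integral_of_le zero_le_one]
    have : ∫ y in (0:ℝ)..1, (t * y ^ (t - 1)) * y ^ k = ∫ y in (0:ℝ)..1, t * y ^ (t - 1 + k) := by
      apply intervalIntegral.integral_congr_ae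
      refine Eventually.of_forall fun y hy => ?_
      rw [Set.uIoc_of_le zero_le_one] at hy
      rw [mul_assoc, Real.rpow_add hy.1, Real.rpow_natCast]
    have hk : (0:ℝ) ≤ k := Nat.cast_nonneg k
    rw [this, intervalIntegral.integral_const_mul, integral_rpow (Or.inl (by linarith))]
    rw [Real.one_rpow, Real.zero_rpow (by linarith : 0 < t - 1 + k + 1).ne']
    rw [show t - 1 + k + 1 = t + k by ring]
    ring
  have hint : ∀ k : ℕ, IntegrableOn (fun y : ℝ => (t * y ^ (t - 1)) * y ^ k) (Set.Ioc (0:ℝ) 1) := by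
    intro k
    rw [← intervalIntegrable_iff_integrableOn_Ioc_of_le zero_le_one]
    apply IntervalIntegrable.mul_continuousOn _ (by fun_prop)
    exact (intervalIntegral.intervalIntegrable_rpow' (by linarith)).const_mul _
  have := auxMom_mix (ν := volume.restrict (Set.Ioc (0:ℝ) 1)) (w := fun y => t * y ^ (t - 1))
    (b := fun y k => y ^ k) (by have := hint 0; simp only [pow_zero, mul_one] at this; exact this)
    (by
      filter_upwards [ae_restrict_mem measurableSet_Ioc] with y hy
      have := Real.rpow_nonneg hy.1.le (t - 1)
      positivity) (by have := hi 0; simp at this; rw [this, div_self ht.ne']) hint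
    (by
      filter_upwards [ae_restrict_mem measurableSet_Ioc] with y hy
      exact auxMom_pt ⟨hy.1.le, hy.2⟩)
  simp_rw [hi] at this
  exact this

lemma auxMom_main {α r : ℝ} (hα : 0 < α) (hr : 0 < r) (hr1 : r < 1) :
    AuxMom (fun k : ℕ => auxE α r k) := by
  have hp : r ∈ Set.Ioo (0:ℝ) 1 := ⟨hr, hr1⟩
  set C := (∫ t in Set.Ioi (0:ℝ), rpowIntegrand₀₁ r t 1)⁻¹ with hC
  have hCp : 0 < C := inv_pos.2 (integral_rpowIntegrand₀₁_one_pos hp)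
  refine auxMom_lim (l := atTop)
    (a := fun (m : ℕ) (k : ℕ) => Real.exp (-(α * (C * ∫ t in (0:ℝ)..m, rpowIntegrand₀₁ r t k)))) ?_ ?_
  · filter_upwards [eventually_gt_atTop 0] with m hm
    have hm0 : (0:ℝ) < m := by exact_mod_cast hm
    set W := ∫ t in (0:ℝ)..m, t ^ (r - 1) with hW
    have hWv : W = m ^ r / r := by
      rw [hW, integral_rpow (Or.inl (by linarith))]
      rw [sub_add_cancel, Real.zero_rpow hr.ne', sub_zero]
    have hWp : 0 < W := by rw [hWv]; positivity
    have hwi : IntervalIntegrable (fun t : ℝ => t ^ (r - 1)) volume 0 m :=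
      intervalIntegral.intervalIntegrable_rpow' (by linarith)
    have hgi : ∀ k : ℕ, IntervalIntegrable (fun t : ℝ => t ^ (r - 1) / W * (t / (t + k))) volume 0 m := by
      intro k
      rw [intervalIntegrable_iff_integrableOn_Ioc_of_le hm0.le] at hwi ⊢
      refine Integrable.mono' (hwi.div_const W) ?_ ?_
      · apply Measurable.aestronglyMeasurable; fun_prop
      · filter_upwards [ae_restrict_mem measurableSet_Ioc] with t ht
        have h1 : 0 ≤ t ^ (r - 1) := Real.rpow_nonneg ht.1.le _
        have ht0 := ht.1
        have hk : (0:ℝ) ≤ k := Nat.cast_nonneg k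
        have h2 : t / (t + k) ≤ 1 := by rw [div_le_one (by linarith)]; linarith
        rw [Real.norm_of_nonneg (by positivity)]
        exact mul_le_of_le_one_right (by positivity) h2
    have key := auxMom_mix (ν := volume.restrict (Set.Ioc (0:ℝ) m)) (w := fun t => t ^ (r - 1) / W)
      (b := fun t k => t / (t + k))
      (((intervalIntegrable_iff_integrableOn_Ioc_of_le hm0.le).1 hwi).div_const W)
      (by
        filter_upwards [ae_restrict_mem measurableSet_Ioc] with t ht
        have h1 : 0 ≤ t ^ (r - 1) := Real.rpow_nonneg ht.1.le _
        positivity)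
      (by
        rw [← intervalIntegral.integral_of_le hm0.le, intervalIntegral.integral_div, ← hW,
          div_self hWp.ne'])
      (fun k => (intervalIntegrable_iff_integrableOn_Ioc_of_le hm0.le).1 (hgi k))
      (by
        filter_upwards [ae_restrict_mem measurableSet_Ioc] with t ht
        exact auxMom_stieltjes ht.1)
    have := auxMom_exp key (l := α * C * W) (by positivity)
    convert this using 3 with k
    rw [← intervalIntegral.integral_of_le hm0.le]
    have e : ∫ t in (0:ℝ)..m, rpowIntegrand₀₁ r t k =
        W * (1 - ∫ t in (0:ℝ)..m, t ^ (r - 1) / W * (t / (t + k))) := by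
      rw [mul_sub, mul_one, hW, ← intervalIntegral.integral_const_mul, ← hW,
        ← intervalIntegral.integral_sub hwi ((hgi k).const_mul W)]
      apply intervalIntegral.integral_congr_ae
      refine Eventually.of_forall fun t ht => ?_
      rw [Set.uIoc_of_le hm0.le] at ht
      have hk : (0:ℝ) ≤ k := Nat.cast_nonneg k
      have ht0 := ht.1
      rw [rpowIntegrand₀₁_eq_pow_div hp ht0.le hk]
      have : t + k ≠ 0 := by positivity
      field_simp
      ring
    rw [e]; ring
  · intro k
    have hk : (0:ℝ) ≤ k := Nat.cast_nonneg k
    have h1 := intervalIntegral_tendsto_integral_Ioi 0 (integrableOn_rpowIntegrand₀₁_Ioi hp hk)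
      tendsto_natCast_atTop_atTop (l := atTop) (b := fun m : ℕ => (m:ℝ))
    have h2 := (Real.continuous_exp.tendsto _).comp ((h1.const_mul C).const_mul α).neg
    rw [← rpow_eq_const_mul_integral hp hk] at h2
    unfold auxE
    rw [neg_mul]
    exact h2

noncomputable def auxX : C(Set.Icc (0:ℝ) 1, ℂ) := ⟨fun x => ((x:ℝ):ℂ), by fun_prop⟩

lemma auxMom_functional {a : ℕ → ℝ} (ha : AuxMom a) :
    ∃ L : C(Set.Icc (0:ℝ) 1, ℂ) →L[ℂ] ℂ, ∀ k, L (auxX ^ k) = a k := by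
  set T : Polynomial ℂ →ₗ[ℂ] C(Set.Icc (0:ℝ) 1, ℂ) := (Polynomial.aeval auxX).toLinearMap with hT
  have hTe : ∀ p (x : Set.Icc (0:ℝ) 1), T p x = p.eval (((x:ℝ)):ℂ) := by
    intro p x
    simp only [hT, AlgHom.toLinearMap_apply, Polynomial.aeval_eq_sum_range,
      Polynomial.eval_eq_sum_range]
    simp [ContinuousMap.sum_apply, auxX]
  have hinj : LinearMap.ker T = ⊥ := by
    rw [LinearMap.ker_eq_bot']
    intro p hp
    apply Polynomial.eq_zero_of_infinite_isRoot
    refine Set.Infinite.mono (s := (fun x : ℝ => (x:ℂ)) '' Set.Icc (0:ℝ) 1) ?_ ?_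
    · rintro _ ⟨x, hx, rfl⟩
      have := hTe p ⟨x, hx⟩
      rw [hp] at this
      exact this.symm
    · apply Set.Infinite.image Complex.ofReal_injective.injOn
      exact Set.Icc_infinite zero_lt_one
  obtain ⟨S, hS⟩ := T.exists_leftInverse_of_injective hinj
  have hS' : ∀ p, S (T p) = p := fun p => congrArg (fun f => f p) hS
  set M : Polynomial ℂ →ₗ[ℂ] ℂ := Polynomial.lsum (fun k => (a k : ℂ) • LinearMap.id) with hM
  have hMe : ∀ p : Polynomial ℂ, M p = ∑ k ∈ Finset.range (p.natDegree + 1), p.coeff k * (a k : ℂ) := by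
    intro p
    rw [hM, Polynomial.lsum_apply, Polynomial.sum_over_range]
    · simp [mul_comm]
    · simp
  have hMb : ∀ p, ‖M p‖ ≤ ‖T p‖ := by
    intro p
    rw [hMe]
    apply ha
    intro x hx
    have := (T p).norm_coe_le_norm ⟨x, hx⟩
    rwa [hTe, Polynomial.eval_eq_sum_range] at this
  set f0 : LinearMap.range T →ₗ[ℂ] ℂ := (M.comp S).comp (LinearMap.range T).subtype with hf0
  have hf0e : ∀ p (h : T p ∈ LinearMap.range T), f0 ⟨T p, h⟩ = M p := by
    intro p h
    simp [hf0, hS']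
  have hb : ∀ y : LinearMap.range T, ‖f0 y‖ ≤ 1 * ‖y‖ := by
    intro y
    obtain ⟨p, hp⟩ := LinearMap.mem_range.1 y.2
    have h1 : f0 y = M p := by
      simp [hf0, ← hp, hS']
    rw [h1, one_mul]
    refine (hMb p).trans ?_
    rw [hp]
    exact le_refl _
  set f : LinearMap.range T →L[ℂ] ℂ :=
    LinearMap.mkContinuous (σ := RingHom.id ℂ) (E := LinearMap.range T) (F := ℂ) f0 1 hb with hf
  obtain ⟨g, hg, -⟩ := exists_extension_norm_eq (LinearMap.range T) f
  refine ⟨g, fun k => ?_⟩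
  have h1 : auxX ^ k = T (Polynomial.X ^ k) := by simp [hT]
  have h2 := hg ⟨T (Polynomial.X ^ k), LinearMap.mem_range_self T _⟩
  rw [h1]
  refine h2.trans ?_
  rw [hf, LinearMap.mkContinuous_apply, hf0e, hM, Polynomial.lsum_apply, ← Polynomial.monomial_one_right_eq_X_pow,
    Polynomial.sum_monomial_index]
  · simp
  · simp

lemma aux_norm_X : ‖auxX‖ ≤ 1 := by
  rw [ContinuousMap.norm_le _ zero_le_one]
  intro x
  simp only [auxX, ContinuousMap.coe_mk, Complex.norm_real]
  rw [Real.norm_of_nonneg x.2.1]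
  exact x.2.2

noncomputable def auxGf (L : C(Set.Icc (0:ℝ) 1, ℂ) →L[ℂ] ℂ) (z : ℂ) : ℂ :=
  L (Ring.inverse (1 - z • auxX))

lemma auxGf_series {L : C(Set.Icc (0:ℝ) 1, ℂ) →L[ℂ] ℂ} {a : ℕ → ℝ} (hL : ∀ k, L (auxX ^ k) = a k)
    {z : ℂ} (hz : ‖z‖ < 1) : auxGf L z = ∑' k : ℕ, z ^ k * (a k : ℂ) := by
  have hn : ‖z • auxX‖ < 1 := by
    rw [norm_smul]
    have := aux_norm_X
    nlinarith [norm_nonneg z, norm_nonneg auxX]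
  unfold auxGf
  rw [NormedRing.inverse_one_sub _ hn]
  have h1 : ((Units.oneSub (z • auxX) hn)⁻¹ : (C(Set.Icc (0:ℝ) 1, ℂ))ˣ).val = ∑' k : ℕ, (z • auxX) ^ k := rfl
  rw [h1, L.map_tsum (summable_geometric_of_norm_lt_one hn)]
  congr 1; funext k
  rw [smul_pow, L.map_smul, hL, smul_eq_mul]

lemma aux_isUnit {z : ℂ} (hz : ∀ x ∈ Set.Icc (0:ℝ) 1, z * x ≠ 1) : IsUnit (1 - z • auxX) := by
  rw [ContinuousMap.isUnit_iff_forall_ne_zero]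
  intro x h
  apply hz x x.2
  simp only [ContinuousMap.sub_apply, ContinuousMap.one_apply, ContinuousMap.smul_apply, auxX,
    ContinuousMap.coe_mk, smul_eq_mul] at h
  rw [sub_eq_zero] at h
  exact h.symm

lemma auxGf_diff (L : C(Set.Icc (0:ℝ) 1, ℂ) →L[ℂ] ℂ) {z : ℂ} (hz : IsUnit (1 - z • auxX)) :
    AnalyticAt ℂ (auxGf L) z := by
  have ho : IsOpen {z : ℂ | IsUnit (1 - z • auxX)} :=
    Units.isOpen.preimage (f := fun z : ℂ => 1 - z • auxX) (by fun_prop)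
  apply DifferentiableOn.analyticAt (s := {z : ℂ | IsUnit (1 - z • auxX)}) _ (ho.mem_nhds hz)
  intro w hw
  apply DifferentiableAt.differentiableWithinAt
  unfold auxGf
  apply L.differentiableAt.comp
  have h1 : DifferentiableAt ℂ (fun z : ℂ => 1 - z • auxX) w := by fun_prop
  exact (differentiableAt_inverse (𝕜 := ℂ) hw).comp w h1

lemma aux_unit_exp {t : ℝ} (ht : t ∈ Set.Ioo 0 (2 * π)) {ρ : ℝ} (h0 : 0 ≤ ρ) :
    IsUnit (1 - ((ρ:ℂ) * Complex.exp (t * Complex.I)) • auxX) := by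
  apply aux_isUnit
  intro x hx h
  have hre := congrArg Complex.re h
  have him := congrArg Complex.im h
  rw [Complex.exp_mul_I, ← Complex.ofReal_cos, ← Complex.ofReal_sin] at hre him
  simp at hre him
  rw [Complex.cos_ofReal_re] at hre
  rw [Complex.sin_ofReal_re] at him
  have hρx : ρ * x ≠ 0 := by
    rintro h
    have : ρ * Real.cos t * x = 0 := by linear_combination (Real.cos t) * h
    linarith
  have hs : Real.sin t = 0 := by
    rcases him with (h | h) | h
    · exact absurd (by rw [h]; ring) hρx
    · exact h
    · exact absurd (by rw [h]; ring) hρx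
  have htp : t = π := by
    rcases lt_trichotomy t π with h | h | h
    · exact absurd hs (Real.sin_pos_of_pos_of_lt_pi ht.1 h).ne'
    · exact h
    · have h4 := Real.sin_pos_of_pos_of_lt_pi (x := t - π) (by linarith) (by linarith [ht.2])
      rw [Real.sin_sub_pi] at h4
      linarith
  rw [htp, Real.cos_pi] at hre
  have := mul_nonneg h0 hx.1
  linarith

lemma auxGf_boundary {L : C(Set.Icc (0:ℝ) 1, ℂ) →L[ℂ] ℂ} {a : ℕ → ℝ} (hL : ∀ k, L (auxX ^ k) = a k)
    (ha0 : ∀ k, 0 ≤ a k) (ha : Summable a) {t : ℝ} (ht : t ∈ Set.Ioo 0 (2 * π)) :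
    auxGf L (Complex.exp (t * Complex.I)) = ∑' k : ℕ, Complex.exp (t * Complex.I) ^ k * (a k : ℂ) := by
  set z := Complex.exp (t * Complex.I) with hz
  have hz1 : ‖z‖ = 1 := by rw [hz]; exact Complex.norm_exp_ofReal_mul_I t
  set ρ : ℕ → ℝ := fun m => 1 - 1 / ((m:ℝ) + 1) with hρ
  have hρt : Tendsto ρ atTop (nhds 1) := by
    have := (tendsto_one_div_add_atTop_nhds_zero_nat (𝕜 := ℝ)).const_sub 1
    rw [sub_zero] at this
    exact this
  have hρ0 : ∀ m, 0 ≤ ρ m := by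
    intro m
    have : 1 / ((m:ℝ) + 1) ≤ 1 := by
      rw [div_le_one (by positivity)]; linarith [(Nat.cast_nonneg m : (0:ℝ) ≤ m)]
    simp only [hρ]; linarith
  have hρ1 : ∀ m, ρ m < 1 := by
    intro m
    have : 0 < 1 / ((m:ℝ) + 1) := by positivity
    simp only [hρ]; linarith
  have hnorm : ∀ m, ‖(ρ m : ℂ) * z‖ = ρ m := by
    intro m; rw [norm_mul, hz1, mul_one, Complex.norm_real, Real.norm_of_nonneg (hρ0 m)]
  have hzt : Tendsto (fun m => (ρ m : ℂ) * z) atTop (nhds z) := by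
    have := ((Complex.continuous_ofReal.tendsto _).comp hρt).mul_const z
    simpa using this
  have hu : IsUnit (1 - z • auxX) := by
    have := aux_unit_exp ht zero_le_one
    simpa using this
  have h1 : Tendsto (fun m => auxGf L ((ρ m : ℂ) * z)) atTop (nhds (auxGf L z)) :=
    ((auxGf_diff L hu).continuousAt.tendsto).comp hzt
  have h2 : Tendsto (fun m => ∑' k : ℕ, ((ρ m : ℂ) * z) ^ k * (a k : ℂ)) atTop
      (nhds (∑' k : ℕ, z ^ k * (a k : ℂ))) := by
    apply tendsto_tsum_of_dominated_convergence ha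
    · intro k
      exact (hzt.pow k).mul_const _
    · refine Eventually.of_forall fun m k => ?_
      rw [norm_mul, norm_pow, hnorm, Complex.norm_real, Real.norm_of_nonneg (ha0 k)]
      exact mul_le_of_le_one_left (ha0 k) (pow_le_one₀ (hρ0 m) (hρ1 m).le)
  refine tendsto_nhds_unique h1 (h2.congr fun m => ?_)
  rw [auxGf_series hL (by rw [hnorm]; exact hρ1 m)]

lemma auxK_periodic (α r β : ℝ) : Function.Periodic (genPoissonKernel α r β) (2 * π) := by
  intro t
  unfold genPoissonKernel
  congr 1; funext k
  congr 1
  rw [show ((k:ℝ) + 1) * (t + 2 * π) - β * π / 2 = (((k:ℝ) + 1) * t - β * π / 2) + ((k + 1 : ℕ):ℝ) * (2 * π) by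
    push_cast; ring, Real.cos_add_nat_mul_two_pi]

lemma auxK_analytic {α r β : ℝ} (hα : 0 < α) (hr : 0 < r) (hr1 : r < 1)
    (hs : Summable (fun k : ℕ => auxE α r (k + 1))) :
    AnalyticOnNhd ℝ (genPoissonKernel α r β) (Set.Ioo 0 (2 * π)) := by
  obtain ⟨L, hL⟩ := auxMom_functional (auxMom_main hα hr hr1)
  set a : ℕ → ℝ := fun k => auxE α r k with ha
  have ha0 : ∀ k, 0 ≤ a k := fun k => (auxE_pos _ _ _).le
  have has : Summable a := by
    rw [← summable_nat_add_iff 1]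
    simpa [ha] using hs
  have heq : ∀ t ∈ Set.Ioo 0 (2 * π), genPoissonKernel α r β t =
      (Complex.exp (-(β * π / 2 : ℝ) * Complex.I) * (auxGf L (Complex.exp (t * Complex.I)) - a 0)).re := by
    intro t ht
    have hn : ∀ k : ℕ, ‖Complex.exp (t * Complex.I) ^ k * (a k : ℂ)‖ = a k := by
      intro k
      rw [norm_mul, norm_pow, Complex.norm_exp_ofReal_mul_I, one_pow, one_mul, Complex.norm_real,
        Real.norm_of_nonneg (ha0 k)]
    have hsum : Summable (fun k : ℕ => Complex.exp (t * Complex.I) ^ k * (a k : ℂ)) :=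
      Summable.of_norm (by simp_rw [hn]; exact has)
    rw [auxGf_boundary hL ha0 has ht, hsum.tsum_eq_zero_add, pow_zero, one_mul, add_sub_cancel_left,
      ← tsum_mul_left, Complex.re_tsum]
    · unfold genPoissonKernel
      congr 1; funext k
      rw [← Complex.exp_nat_mul, ← mul_assoc, ← Complex.exp_add]
      rw [show -((β * π / 2 : ℝ):ℂ) * Complex.I + ((k+1:ℕ):ℂ) * (t * Complex.I) =
        (((k + 1) * t - β * π / 2 : ℝ) : ℂ) * Complex.I by push_cast; ring]
      rw [Complex.re_mul_ofReal, Complex.exp_ofReal_mul_I_re]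
      simp only [ha, auxE]
      push_cast
      ring
    · exact ((summable_nat_add_iff 1).2 hsum).mul_left _
  intro t ht
  have hu : IsUnit (1 - Complex.exp (t * Complex.I) • auxX) := by
    have := aux_unit_exp ht zero_le_one
    simpa using this
  have h1 : AnalyticAt ℂ (fun w : ℂ => Complex.exp (-(β * π / 2 : ℝ) * Complex.I) *
      (auxGf L (Complex.exp (w * Complex.I)) - a 0)) (t:ℂ) := by
    apply analyticAt_const.mul
    refine AnalyticAt.sub ?_ analyticAt_const
    have := AnalyticAt.comp (g := auxGf L) (f := fun w : ℂ => Complex.exp (w * Complex.I)) (x := (t:ℂ))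
      (auxGf_diff L hu) (by fun_prop)
    exact this
  have h2 := (h1.restrictScalars (𝕜 := ℝ)).comp (f := fun t : ℝ => (t:ℂ)) (x := t) (Complex.ofRealCLM.analyticAt t)
  have h3 := (Complex.reCLM.analyticAt _).comp h2
  refine h3.congr ?_
  filter_upwards [isOpen_Ioo.mem_nhds ht] with s hs
  rw [heq s hs]
  rfl

lemma auxK_ne {α r β : ℝ} (hs : Summable (fun k : ℕ => auxE α r (k + 1))) :
    ∃ t ∈ Set.Ioo 0 (2 * π), genPoissonKernel α r β t ≠ 0 := by
  by_contra! hcon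
  set θ := β * π / 2 with hθ
  have hf : ∀ x, genPoissonKernel α r β x = 0 + ∑' k : ℕ, ((auxE α r (k+1) * Real.cos θ) * Real.cos ((k + 1 : ℕ) * x - 0)
      + (auxE α r (k+1) * Real.sin θ) * Real.cos ((k + 1 : ℕ) * x - π / 2)) := by
    intro x
    rw [zero_add]
    unfold genPoissonKernel
    congr 1; funext k
    rw [Real.cos_sub_pi_div_two, Real.cos_sub, sub_zero, ← hθ]
    push_cast
    unfold auxE
    ring
  have h := aux_coef (genPoissonKernel α r β) 0 (fun k => auxE α r (k+1) * Real.cos θ)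
    (fun k => auxE α r (k+1) * Real.sin θ) ((hs.mul_right _).abs) ((hs.mul_right _).abs) hf 1 θ
  have h0 : ∫ x in (-π)..π, genPoissonKernel α r β x * Real.cos ((1:ℕ) * x - θ) = 0 := by
    rw [← intervalIntegral.integral_zero (a := -π) (b := π)]
    apply intervalIntegral.integral_congr_ae
    have : ∀ᵐ x : ℝ, x ≠ 0 := by simp [ae_iff]
    filter_upwards [this] with x hx hx2
    rw [Set.uIoc_of_le (by linarith [Real.pi_pos])] at hx2
    have : genPoissonKernel α r β x = 0 := by
      rcases lt_or_gt_of_ne hx with h | h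
      · rw [← auxK_periodic α r β x]
        exact hcon _ ⟨by linarith [hx2.1, Real.pi_pos], by linarith⟩
      · exact hcon _ ⟨h, by linarith [hx2.2, Real.pi_pos]⟩
    rw [this, zero_mul]
  rw [h0] at h
  simp only [zero_mul, zero_add, one_ne_zero, if_false, Nat.sub_self] at h
  have e : π * (auxE α r ((0:ℕ)+1) * Real.cos θ * Real.cos θ + auxE α r ((0:ℕ)+1) * Real.sin θ * Real.sin θ) = π * auxE α r ((0:ℕ)+1) := by
    linear_combination (π * auxE α r ((0:ℕ)+1)) * Real.sin_sq_add_cos_sq θ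
  rw [e] at h
  have := mul_pos Real.pi_pos (auxE_pos α r ((0:ℕ)+1))
  linarith

lemma auxK_ae {α r β : ℝ} (hα : 0 < α) (hr : 0 < r) (hr1 : r < 1)
    (hs : Summable (fun k : ℕ => auxE α r (k + 1))) (x : ℝ) :
    ∀ᵐ t : ℝ, genPoissonKernel α r β (x - t) ≠ 0 := by
  obtain ⟨t0, ht0, hne⟩ := auxK_ne (β := β) hs
  have h1 := (auxK_analytic (β := β) hα hr hr1 hs).preimage_zero_mem_codiscreteWithin hne ht0
    (isConnected_Ioo (by linarith [Real.pi_pos]))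
  have h2 := ae_restrict_le_codiscreteWithin (μ := (volume : Measure ℝ)) measurableSet_Ioo h1
  have h3 : ∀ᵐ t : ℝ, t ∈ Set.Ioo 0 (2 * π) → genPoissonKernel α r β t ≠ 0 := by
    rw [← ae_restrict_iff' measurableSet_Ioo]
    exact h2
  have h4 : ∀ m : ℤ, ∀ᵐ t : ℝ, (x - t) - m * (2 * π) ∈ Set.Ioo 0 (2 * π) →
      genPoissonKernel α r β ((x - t) - m * (2 * π)) ≠ 0 := by
    intro m
    have hq : Measure.QuasiMeasurePreserving (fun t : ℝ => (x - m * (2 * π)) - t) volume volume :=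
      (Measure.measurePreserving_sub_left volume (x - m * (2 * π))).quasiMeasurePreserving
    have := hq.ae h3
    filter_upwards [this] with t ht
    rw [show (x - t) - m * (2 * π) = (x - m * (2 * π)) - t by ring]
    exact ht
  have h5 : ∀ᵐ t : ℝ, ∀ m : ℤ, t ≠ x - m * (2 * π) := by
    rw [ae_all_iff]; intro m
    simp [ae_iff]
  filter_upwards [ae_all_iff.2 h4, h5] with t ht ht5
  set m := ⌊(x - t) / (2 * π)⌋
  have hp : 0 < 2 * π := by positivity
  have a1 : (m:ℝ) ≤ (x - t) / (2 * π) := Int.floor_le _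
  have a2 : (x - t) / (2 * π) < m + 1 := Int.lt_floor_add_one _
  rw [le_div_iff₀ hp] at a1
  rw [div_lt_iff₀ hp] at a2
  have a3 : (m:ℝ) * (2 * π) ≠ x - t := fun h => ht5 m (by linarith)
  have := ht m ⟨by rcases lt_or_eq_of_le a1 with h | h; linarith; exact absurd h a3, by linarith⟩
  rwa [(auxK_periodic α r β).sub_int_mul_eq] at this

lemma aux_n0 {α r : ℝ} (hα : 0 < α) (hr : 0 < r) (hr1 : r < 1) {n : ℕ} (hn : n₀one α r ≤ n) :
    0 < n ∧ 1 / (α * r) * (n : ℝ) ^ (-r) + α * r * (n : ℝ) ^ (-(1 - r)) ≤ 1 / 14 := by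
  have hne : {n : ℕ | 0 < n ∧
    1 / (α * r) * (n : ℝ) ^ (-r) + α * r * (n : ℝ) ^ (-(1 - r)) ≤ 1 / 14}.Nonempty := by
    have h1 : Tendsto (fun n : ℕ => (n:ℝ) ^ (-r)) atTop (nhds 0) :=
      (tendsto_rpow_neg_atTop hr).comp tendsto_natCast_atTop_atTop
    have h2 : Tendsto (fun n : ℕ => (n:ℝ) ^ (-(1-r))) atTop (nhds 0) :=
      (tendsto_rpow_neg_atTop (by linarith)).comp tendsto_natCast_atTop_atTop
    have h3 := (h1.const_mul (1 / (α * r))).add (h2.const_mul (α * r))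
    rw [mul_zero, mul_zero, add_zero] at h3
    have h4 := h3.eventually (ge_mem_nhds (b := 0) (a := (1:ℝ)/14) (by norm_num))
    obtain ⟨k, hk1, hk2⟩ := ((eventually_gt_atTop 0).and h4).exists
    exact ⟨k, hk1, hk2⟩
  obtain ⟨h1, h2⟩ := Nat.sInf_mem hne
  change 0 < n₀one α r at h1
  change 1 / (α * r) * (n₀one α r : ℝ) ^ (-r) + α * r * (n₀one α r : ℝ) ^ (-(1 - r)) ≤ 1 / 14 at h2
  refine ⟨lt_of_lt_of_le h1 hn, le_trans ?_ h2⟩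
  have hp : (0:ℝ) < n₀one α r := by exact_mod_cast h1
  have hle : (n₀one α r : ℝ) ≤ n := by exact_mod_cast hn
  have a1 := Real.rpow_le_rpow_of_nonpos hp hle (show -r ≤ 0 by linarith)
  have a2 := Real.rpow_le_rpow_of_nonpos hp hle (show -(1-r) ≤ 0 by linarith)
  have : 0 < α * r := by positivity
  gcongr

lemma auxK_cont {α r β : ℝ} (hs : Summable (fun k : ℕ => auxE α r (k + 1))) :
    Continuous (genPoissonKernel α r β) := by
  unfold genPoissonKernel
  refine continuous_tsum (u := fun k : ℕ => auxE α r (k+1)) (fun k => by fun_prop) hs ?_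
  intro k x
  rw [norm_mul, Real.norm_of_nonneg (Real.exp_pos _).le]
  exact mul_le_of_le_one_right (Real.exp_pos _).le (Real.abs_cos_le_one _)

lemma aux_period_int {f : ℝ → ℝ} (hf : ∀ x, f (x + 2 * π) = f x) :
    IntervalIntegrable f volume (-π) π ↔ IntegrableOn f (Set.Ioc 0 (2 * π)) := by
  have hp : Function.Periodic f (2 * π) := hf
  have h2 : (0:ℝ) < 2 * π := by positivity
  constructor
  · intro h
    have := hp.intervalIntegrable h2.ne' (t := -π) (by convert h using 1; ring) 0 (2 * π)
    rwa [intervalIntegrable_iff_integrableOn_Ioc_of_le h2.le] at this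
  · intro h
    rw [← intervalIntegrable_iff_integrableOn_Ioc_of_le h2.le] at h
    exact hp.intervalIntegrable h2.ne' (t := 0) (by simpa using h) _ _

lemma aux_period_eq {f : ℝ → ℝ} (hf : ∀ x, f (x + 2 * π) = f x) :
    ∫ t in (-π)..π, f t = ∫ t in (0:ℝ)..(2 * π), f t := by
  have hp : Function.Periodic f (2 * π) := hf
  have := hp.intervalIntegral_add_eq (-π) 0
  rw [zero_add, show -π + 2 * π = π by ring] at this
  exact this

lemma aux_upper {α r β : ℝ} (hα : 0 < α) (hr : 0 < r) (hr1 : r < 1) {n : ℕ} (hn : 0 < n)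
    (he : AuxEst α r n) (hs : Summable (fun k : ℕ => auxE α r (k + 1)))
    {f : ℝ → ℝ} (hf : f ∈ poissonClass α r β 1) (x : ℝ) :
    |f x - fourierSum (n - 1) f x| ≤ (1 / π) * ∑' j : ℕ, auxE α r (n + j) := by
  obtain ⟨hfp, a₀, φ, hφp, hφn, -, hfe⟩ := hf
  have hS : 0 ≤ ∑' j : ℕ, auxE α r (n + j) := tsum_nonneg fun j => (auxE_pos _ _ _).le
  have hn1 : n - 1 + 1 = n := Nat.sub_add_cancel hn
  by_cases hi : IntegrableOn φ (Set.Ioc 0 (2 * π))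
  · have hi2 := (aux_period_int hφp).2 hi
    have hI : ∫ t in (-π)..π, |φ t| ≤ 1 := by
      rw [aux_period_eq (f := fun t => |φ t|) (fun t => by simp only [hφp]),
        intervalIntegral.integral_of_le (by positivity)]
      have e := integral_norm_eq_lintegral_enorm hi.aestronglyMeasurable
      simp only [Real.norm_eq_abs] at e
      rw [e]
      rw [eLpNorm_one_eq_lintegral_enorm] at hφn
      exact ENNReal.toReal_le_of_le_ofReal zero_le_one (by simpa using hφn)
    rw [aux_dev hs φ hi2 f a₀ hfe (n - 1) x, abs_mul, abs_of_pos (show 0 < 1 / π by positivity), hn1]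
    gcongr
    have hb : ∀ j : ℕ, ‖auxE α r (n + j) *
      ∫ t in (-π)..π, Real.cos ((n + j) * (x - t) - β * π / 2) * φ t‖ ≤ auxE α r (n + j) := by
      intro j
      rw [norm_mul, Real.norm_of_nonneg (auxE_pos _ _ _).le]
      refine mul_le_of_le_one_right (auxE_pos _ _ _).le ?_
      exact (aux_abs_int_le φ _ hi2 (fun t => Real.abs_cos_le_one _)).trans hI
    exact tsum_of_norm_bounded he.sumE.hasSum hb
  · have hz : ∀ x, ∫ t in (-π)..π, genPoissonKernel α r β (x - t) * φ t = 0 := by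
      intro x
      apply intervalIntegral.integral_undef
      intro hc
      apply hi
      have hper : ∀ t, genPoissonKernel α r β (x - (t + 2 * π)) * φ (t + 2 * π) =
          genPoissonKernel α r β (x - t) * φ t := by
        intro t
        rw [hφp, ← auxK_periodic α r β (x - (t + 2 * π))]
        congr 2; ring
      have hc2 := (aux_period_int (f := fun t => genPoissonKernel α r β (x - t) * φ t) hper).1 hc
      have hKm : Measurable (fun t => (genPoissonKernel α r β (x - t))⁻¹) :=
        ((auxK_cont hs).measurable.comp (measurable_const.sub measurable_id)).inv
      have hm : AEStronglyMeasurable φ (volume.restrict (Set.Ioc 0 (2 * π))) := by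
        refine (hKm.aestronglyMeasurable.mul hc2.aestronglyMeasurable).congr ?_
        filter_upwards [ae_restrict_of_ae (auxK_ae (β := β) hα hr hr1 hs x)] with t ht
        simp only [Pi.mul_apply]
        field_simp
      exact memLp_one_iff_integrable.1 ⟨hm, lt_of_le_of_lt hφn ENNReal.one_lt_top⟩
    have := aux_dev (β := β) hs (fun _ => 0) (by simp) f a₀ (fun x => by
      rw [hfe x, hz x]; simp) (n - 1) x
    rw [this]
    simp
    positivity

lemma aux_ind {h : ℝ → ℝ} (hh : Continuous h) {s δ : ℝ} (h0 : 0 ≤ s) (hδ : 0 ≤ δ) (h2 : s + δ ≤ 2 * π) (c : ℝ) :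
    IntervalIntegrable (fun t => h t * (Set.Ioc s (s + δ)).indicator (fun _ => c) t) volume 0 (2 * π) ∧
    ∫ t in (0:ℝ)..(2 * π), h t * (Set.Ioc s (s + δ)).indicator (fun _ => c) t = c * ∫ t in s..(s + δ), h t := by
  have e : (fun t => h t * (Set.Ioc s (s + δ)).indicator (fun _ => c) t) =
      (Set.Ioc s (s + δ)).indicator (fun t => c * h t) := by
    funext t
    by_cases ht : t ∈ Set.Ioc s (s + δ)
    · simp [Set.indicator_of_mem ht, mul_comm]
    · simp [Set.indicator_of_notMem ht]
  have hp : (0:ℝ) ≤ 2 * π := by positivity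
  have hc : Continuous (fun t => c * h t) := by fun_prop
  rw [e]
  constructor
  · rw [intervalIntegrable_iff_integrableOn_Ioc_of_le hp]
    apply IntegrableOn.indicator _ measurableSet_Ioc
    exact (hc.integrableOn_Icc).mono_set Set.Ioc_subset_Icc_self
  · rw [intervalIntegral.integral_of_le hp, setIntegral_indicator measurableSet_Ioc,
      Set.inter_eq_right.2 (Set.Ioc_subset_Ioc h0 h2), ← intervalIntegral.integral_of_le (by linarith),
      intervalIntegral.integral_const_mul]

lemma aux_cos_ge (y : ℝ) : 1 - |y| ≤ Real.cos y := by
  by_cases h : |y| ≤ 2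
  · have := Real.one_sub_sq_div_two_le_cos (x := y)
    rw [← sq_abs] at this
    nlinarith [abs_nonneg y]
  · linarith [Real.neg_one_le_cos y]

/-- the test function -/
noncomputable def auxg (s1 s2 δ : ℝ) (t : ℝ) : ℝ :=
  (Set.Ioc s1 (s1 + δ)).indicator (fun _ => 1 / (2 * δ)) t - (Set.Ioc s2 (s2 + δ)).indicator (fun _ => 1 / (2 * δ)) t

noncomputable def auxphi (s1 s2 δ : ℝ) (t : ℝ) : ℝ :=
  auxg s1 s2 δ (toIocMod (show (0:ℝ) < 2 * π by positivity) 0 t)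

lemma auxphi_per (s1 s2 δ : ℝ) (t : ℝ) : auxphi s1 s2 δ (t + 2 * π) = auxphi s1 s2 δ t := by
  unfold auxphi; rw [toIocMod_add_right]

lemma auxphi_eq (s1 s2 δ : ℝ) {t : ℝ} (ht : t ∈ Set.Ioc 0 (2 * π)) : auxphi s1 s2 δ t = auxg s1 s2 δ t := by
  unfold auxphi
  rw [(toIocMod_eq_self _).2 (by simpa using ht)]

lemma auxphi_int {s1 s2 δ : ℝ} (h1 : 0 ≤ s1) (h2 : 0 ≤ s2) (hδ : 0 ≤ δ) (h1' : s1 + δ ≤ 2 * π)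
    (h2' : s2 + δ ≤ 2 * π) {h : ℝ → ℝ} (hh : Continuous h) :
    IntervalIntegrable (fun t => h t * auxphi s1 s2 δ t) volume 0 (2 * π) ∧
    ∫ t in (0:ℝ)..(2 * π), h t * auxphi s1 s2 δ t =
      1 / (2 * δ) * ((∫ t in s1..(s1 + δ), h t) - ∫ t in s2..(s2 + δ), h t) := by
  have hp : (0:ℝ) ≤ 2 * π := by positivity
  obtain ⟨a1, b1⟩ := aux_ind hh h1 hδ h1' (1 / (2 * δ))
  obtain ⟨a2, b2⟩ := aux_ind hh h2 hδ h2' (1 / (2 * δ))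
  have e : Set.EqOn (fun t => h t * (Set.Ioc s1 (s1 + δ)).indicator (fun _ => 1 / (2 * δ)) t -
      h t * (Set.Ioc s2 (s2 + δ)).indicator (fun _ => 1 / (2 * δ)) t)
      (fun t => h t * auxphi s1 s2 δ t) (Set.uIoc 0 (2 * π)) := by
    intro t ht
    rw [Set.uIoc_of_le hp] at ht
    simp only [auxphi_eq s1 s2 δ ht, auxg]
    ring
  constructor
  · exact (a1.sub a2).congr e
  · rw [mul_sub, ← b1, ← b2, ← intervalIntegral.integral_sub a1 a2]
    refine intervalIntegral.integral_congr_ae (ae_of_all _ fun t ht => (e ht).symm)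

lemma auxphi_norm {s1 s2 δ : ℝ} (hδ : 0 < δ) :
    eLpNorm (auxphi s1 s2 δ) 1 (volume.restrict (Set.Ioc (0 : ℝ) (2 * π))) ≤ 1 := by
  have e : eLpNorm (auxphi s1 s2 δ) 1 (volume.restrict (Set.Ioc (0 : ℝ) (2 * π))) =
      eLpNorm (auxg s1 s2 δ) 1 (volume.restrict (Set.Ioc (0 : ℝ) (2 * π))) := by
    apply eLpNorm_congr_ae
    filter_upwards [ae_restrict_mem measurableSet_Ioc] with t ht
    exact auxphi_eq s1 s2 δ ht
  rw [e]
  refine (eLpNorm_mono_measure _ Measure.restrict_le_self).trans ?_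
  have hb : ∀ s : ℝ, eLpNorm ((Set.Ioc s (s + δ)).indicator (fun _ => 1 / (2 * δ))) 1 volume ≤ ENNReal.ofReal (1/2) := by
    intro s
    refine (eLpNorm_indicator_const_le _ _).trans ?_
    rw [Real.volume_Ioc, Real.enorm_eq_ofReal (by positivity)]
    simp only [ENNReal.toReal_one, div_one, ENNReal.rpow_one]
    rw [← ENNReal.ofReal_mul (by positivity)]
    apply ENNReal.ofReal_le_ofReal
    apply le_of_eq
    field_simp
    ring
  have hmeas : ∀ s : ℝ, AEStronglyMeasurable ((Set.Ioc s (s + δ)).indicator (fun _ => 1 / (2 * δ))) (volume : Measure ℝ) :=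
    fun s => (measurable_const.indicator measurableSet_Ioc).aestronglyMeasurable
  have := eLpNorm_sub_le (hmeas s1) (hmeas s2) (le_refl (1:ℝ≥0∞))
  refine (this.trans (add_le_add (hb s1) (hb s2))).trans ?_
  rw [← ENNReal.ofReal_add (by norm_num) (by norm_num)]
  norm_num

lemma aux_lower {α r β X : ℝ} {n : ℕ} (hn : 2 ≤ n) (hX0 : 0 < X) (hX1 : X ≤ 1)
    (hE : Summable (fun j : ℕ => auxE α r (n + j)))
    (hM : Summable (fun j : ℕ => (j : ℝ) * auxE α r (n + j)))
    (hs : Summable (fun k : ℕ => auxE α r (k + 1))) :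
    ∃ f ∈ poissonClass α r β 1, ∃ x : ℝ, (1 / π) * ((1 - X) * ∑' j : ℕ, auxE α r (n + j)
      - 4 * π / n * ∑' j : ℕ, (j:ℝ) * auxE α r (n + j)) ≤ |f x - fourierSum (n - 1) f x| := by
  have hn0 : (0:ℝ) < n := by exact_mod_cast (by omega : 0 < n)
  have hn2 : (2:ℝ) ≤ n := by exact_mod_cast hn
  have hpi := Real.pi_pos
  have hpi3 := Real.pi_gt_three
  set θ := β * π / 2 with hθ
  set m := ⌈θ / (2 * π)⌉ with hm
  have m1 : θ ≤ m * (2 * π) := by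
    have := Int.le_ceil (θ / (2 * π)); rwa [div_le_iff₀ (by positivity)] at this
  have m2 : m * (2 * π) < θ + 2 * π := by
    have := Int.ceil_lt_add_one (θ / (2 * π))
    have h3 : (m:ℝ) * (2 * π) < (θ / (2 * π) + 1) * (2 * π) := by gcongr
    rwa [add_mul, div_mul_cancel₀ _ (by positivity), one_mul] at h3
  set s1 := (m * (2 * π) - θ) / n with hs1
  set s2 := s1 + π / n with hs2
  set δ := X / n with hδ
  have hδ0 : 0 < δ := by positivity
  have p1 : n * s1 = m * (2 * π) - θ := by rw [hs1]; field_simp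
  have p2 : n * s2 = m * (2 * π) - θ + π := by rw [hs2, mul_add, p1]; field_simp
  have p3 : n * δ = X := by rw [hδ]; field_simp
  have q1 : 0 ≤ s1 := by rw [hs1]; apply div_nonneg _ hn0.le; linarith
  have q2 : 0 ≤ s2 := by positivity
  have w : (4 * π / n) * n = 4 * π := by field_simp
  have w4 : 4 * π / n ≤ 2 * π := by rw [div_le_iff₀ hn0]; nlinarith
  have q3 : s1 + δ ≤ 4 * π / n := by
    rw [le_div_iff₀ hn0]; nlinarith
  have q4 : s2 + δ ≤ 4 * π / n := by
    rw [le_div_iff₀ hn0]; nlinarith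
  set φ := auxphi s1 s2 δ with hφ
  have hint := fun (h : ℝ → ℝ) (hh : Continuous h) =>
    auxphi_int q1 q2 hδ0.le (q3.trans w4) (q4.trans w4) hh
  have hφi : IntervalIntegrable φ volume (-π) π := by
    rw [aux_period_int (auxphi_per s1 s2 δ),
      ← intervalIntegrable_iff_integrableOn_Ioc_of_le (by positivity)]
    simpa using (hint (fun _ => 1) continuous_const).1
  set f : ℝ → ℝ := fun x => 0 / 2 + (1 / π) * ∫ t in (-π)..π, genPoissonKernel α r β (x - t) * φ t with hf
  have hcl : f ∈ poissonClass α r β 1 := by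
    refine ⟨?_, 0, φ, auxphi_per s1 s2 δ, auxphi_norm hδ0, ?_, fun x => rfl⟩
    · intro x
      simp only [hf]
      congr 2
      apply intervalIntegral.integral_congr
      intro t _
      simp only
      rw [show x + 2 * π - t = (x - t) + 2 * π by ring, auxK_periodic α r β]
    · have := (hint (fun _ => 1) continuous_const).2
      simp only [one_mul] at this
      rw [this]
      simp
  refine ⟨f, hcl, 0, le_trans ?_ (le_abs_self _)⟩
  rw [aux_dev hs φ hφi f 0 (fun x => rfl) (n - 1) 0, Nat.sub_add_cancel (by omega)]
  gcongr
  rw [← tsum_mul_left, ← tsum_mul_left, ← Summable.tsum_sub (hE.mul_left _) (hM.mul_left _)]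
  refine Summable.tsum_le_tsum ?_ ((hE.mul_left _).sub (hM.mul_left _)) ?_
  · intro j
    have hj : (0:ℝ) ≤ j := Nat.cast_nonneg j
    have hper : ∫ t in (-π)..π, Real.cos ((n + j) * (0 - t) - β * π / 2) * φ t =
        ∫ t in (0:ℝ)..(2 * π), Real.cos ((n + j) * (0 - t) - β * π / 2) * φ t := by
      apply aux_period_eq (f := fun t => Real.cos ((n + j) * (0 - t) - β * π / 2) * φ t)
      intro t
      rw [show φ (t + 2 * π) = φ t from auxphi_per s1 s2 δ t]
      congr 1
      rw [← Real.cos_add_nat_mul_two_pi _ (n + j)]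
      congr 1; push_cast; ring
    have hcont : Continuous (fun t : ℝ => Real.cos ((n + j) * (0 - t) - β * π / 2)) := by fun_prop
    rw [hper, (hint _ hcont).2]
    set c := 1 - X - 4 * π / n * j with hc
    have bnd : ∀ s t : ℝ, 0 ≤ s → s + δ ≤ 4 * π / n → t ∈ Set.Icc s (s + δ) →
        c ≤ Real.cos (n * (t - s) + j * t) := by
      intro s t h1 h2 ht
      refine le_trans ?_ (aux_cos_ge _)
      have h0 : 0 ≤ t - s := by linarith [ht.1]
      have h0t : 0 ≤ t := by linarith [ht.1]
      rw [abs_of_nonneg (by positivity)]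
      have a1 : n * (t - s) ≤ X := by rw [← p3]; apply mul_le_mul_of_nonneg_left _ hn0.le; linarith [ht.2]
      have a2 : j * t ≤ j * (4 * π / n) := by apply mul_le_mul_of_nonneg_left _ hj; linarith [ht.2]
      rw [hc]; linarith
    have i1 : δ * c ≤ ∫ t in s1..(s1 + δ), Real.cos ((n + j) * (0 - t) - β * π / 2) := by
      have := intervalIntegral.integral_mono_on (μ := volume) (a := s1) (b := s1 + δ) (f := fun _ => c) (by linarith)
        intervalIntegrable_const (hcont.intervalIntegrable _ _) (fun t ht => by
          refine (bnd s1 t q1 q3 ht).trans (le_of_eq ?_)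
          rw [← Real.cos_neg, ← Real.cos_add_int_mul_two_pi _ (-m)]
          rw [← hθ]
          congr 1
          push_cast
          linear_combination p1)
      simpa using this
    have i2 : δ * c ≤ -∫ t in s2..(s2 + δ), Real.cos ((n + j) * (0 - t) - β * π / 2) := by
      rw [← intervalIntegral.integral_neg]
      have := intervalIntegral.integral_mono_on (μ := volume) (a := s2) (b := s2 + δ) (f := fun _ => c) (by linarith)
        intervalIntegrable_const (hcont.neg.intervalIntegrable _ _) (fun t ht => by
          refine (bnd s2 t q2 q4 ht).trans (le_of_eq ?_)
          change _ = -Real.cos ((n + j) * (0 - t) - β * π / 2)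
          rw [← Real.cos_add_pi, ← Real.cos_neg, ← Real.cos_add_int_mul_two_pi _ (-m)]
          rw [← hθ]
          congr 1
          push_cast
          linear_combination p2)
      simpa using this
    have hA : c ≤ 1 / (2 * δ) * ((∫ t in s1..(s1 + δ), Real.cos ((n + j) * (0 - t) - β * π / 2)) -
        ∫ t in s2..(s2 + δ), Real.cos ((n + j) * (0 - t) - β * π / 2)) := by
      calc c = 1 / (2 * δ) * (δ * c + δ * c) := by field_simp; ring
        _ ≤ _ := by gcongr; linarith
    have := mul_le_mul_of_nonneg_left hA (auxE_pos α r (n + j)).le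
    refine le_trans (le_of_eq ?_) this
    rw [hc]; ring
  · refine Summable.of_norm_bounded (g := fun j : ℕ => auxE α r (n + j) * ∫ t in (-π)..π, |φ t|)
      (hE.mul_right _) ?_
    intro j
    rw [norm_mul, Real.norm_of_nonneg (auxE_pos _ _ _).le]
    exact mul_le_mul_of_nonneg_left (aux_abs_int_le φ _ hφi (fun t => Real.abs_cos_le_one _))
      (auxE_pos _ _ _).le

theorem statement2 (α r β : ℝ)
    (hr0 : 0 < r) (hr1 : r < 1) (hα : 0 < α) :
    ∀ n : ℕ, n₀one α r ≤ n →
      ∃ γ : ℝ, |γ| ≤ (14 * π) ^ 2 ∧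
        EnC α r β 1 n =
          Real.exp (-α * (n : ℝ) ^ r) * (n : ℝ) ^ (1 - r) *
            (1 / (π * α * r) +
              γ * ((α * r) ^ (-(2 : ℝ)) * (n : ℝ) ^ (-r) + (n : ℝ) ^ (-(1 - r)))) := by
  intro n hn
  obtain ⟨hn0, hcond⟩ := aux_n0 hα hr0 hr1 hn
  have he := aux_est hα hr0 hr1 hn0 hcond
  have hnr : (0:ℝ) < n := by exact_mod_cast hn0
  have hs : Summable (fun k : ℕ => auxE α r (k + 1)) := by
    have h1 : Summable (fun k : ℕ => auxE α r (k:ℝ)) := by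
      rw [← summable_nat_add_iff n]
      refine he.sumE.congr fun j => ?_
      push_cast; rw [add_comm]
    have := (summable_nat_add_iff 1).2 h1
    simpa using this
  have hup := fun (f : ℝ → ℝ) (hf : f ∈ poissonClass α r β 1) (x : ℝ) =>
    aux_upper hα hr0 hr1 hn0 he hs hf x
  obtain ⟨-, -, hlo, hhi, hmom⟩ := id he
  have hF := auxF_nonneg hα hr0 hnr
  have hpi := Real.pi_pos
  have har : 0 < α * r := by positivity
  have hXp : 0 < (n:ℝ) ^ (-r) / (α * r) := by positivity
  have hYp : 0 < α * r * (n:ℝ) ^ (-(1 - r)) := by positivity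
  have hXY : (n:ℝ) * ((n:ℝ) ^ (-r) / (α * r)) * (α * r * (n:ℝ) ^ (-(1 - r))) = 1 := by
    have : (n:ℝ) * (n:ℝ) ^ (-r) * (n:ℝ) ^ (-(1 - r)) = 1 := by
      nth_rewrite 1 [← Real.rpow_one (n:ℝ)]
      rw [← Real.rpow_add hnr, ← Real.rpow_add hnr]
      rw [show (1:ℝ) + -r + -(1 - r) = 0 by ring, Real.rpow_zero]
    field_simp
    linarith
  have hsum : (n:ℝ) ^ (-r) / (α * r) + α * r * (n:ℝ) ^ (-(1 - r)) ≤ 1 / 14 := by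
    refine le_trans (le_of_eq ?_) hcond; ring
  have hQ : (α * r) ^ (-(2 : ℝ)) * (n : ℝ) ^ (-r) + (n : ℝ) ^ (-(1 - r)) =
      ((n:ℝ) ^ (-r) / (α * r) + α * r * (n:ℝ) ^ (-(1 - r))) / (α * r) := by
    rw [Real.rpow_neg har.le, Real.rpow_two]
    field_simp
  have hFe : Real.exp (-α * (n : ℝ) ^ r) * (n : ℝ) ^ (1 - r) = auxF α r n * (α * r) := by
    unfold auxF auxE; field_simp
  rw [hQ, hFe]
  set X := (n:ℝ) ^ (-r) / (α * r) with hX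
  set Y := α * r * (n:ℝ) ^ (-(1 - r)) with hY
  set F := auxF α r n with hFd
  set S := ∑' j : ℕ, auxE α r (n + j) with hS
  set M := ∑' j : ℕ, (j:ℝ) * auxE α r (n + j) with hM
  have hn2 : 2 ≤ n := by
    by_contra hc
    have : (n:ℝ) ≤ 1 := by exact_mod_cast (by omega : n ≤ 1)
    nlinarith [mul_pos hXp hYp]
  have hS0 : 0 ≤ S := hF.le.trans hlo
  have hB0 : 0 ≤ 1 / π * S := by positivity
  have hEu : EnC α r β 1 n ≤ 1 / π * S := by
    unfold EnC
    refine Real.iSup_le (fun f => Real.iSup_le (fun hf => Real.iSup_le (fun x => hup f hf x) hB0) hB0) hB0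
  obtain ⟨f, hf, x, hlow⟩ := aux_lower (β := β) hn2 hXp (by linarith) he.sumE he.sumM hs
  have hEl : |f x - fourierSum (n - 1) f x| ≤ EnC α r β 1 n := by
    have b1 : BddAbove (Set.range fun x => |f x - fourierSum (n - 1) f x|) :=
      ⟨1 / π * S, by rintro _ ⟨y, rfl⟩; exact hup f hf y⟩
    have b2 : BddAbove (Set.range fun f => ⨆ (_ : f ∈ poissonClass α r β 1), ⨆ x : ℝ, |f x - fourierSum (n - 1) f x|) :=
      ⟨1 / π * S, by
        rintro _ ⟨g, rfl⟩
        exact Real.iSup_le (fun hg => Real.iSup_le (fun x => hup g hg x) hB0) hB0⟩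
    refine le_trans (le_ciSup b1 x) ?_
    unfold EnC
    refine le_trans (le_of_eq ?_) (le_ciSup b2 f)
    rw [ciSup_pos hf]
  have hL := hlow.trans hEl
  set E := EnC α r β 1 n
  -- two sided bounds
  have hXY0 : 0 < X + Y := by positivity
  have hE1 : E ≤ F / π * (1 + 2 * (X + Y)) := by
    calc E ≤ 1 / π * S := hEu
      _ ≤ 1 / π * (F * (1 + 2 * X + Y)) := by gcongr
      _ ≤ 1 / π * (F * (1 + 2 * X + 2 * Y)) := by gcongr; linarith
      _ = _ := by ring
  have hE2 : F / π * (1 - (20 * π + 1) * (X + Y)) ≤ E := by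
    refine le_trans ?_ hL
    have e1 : 4 * π / n * M ≤ 20 * π * F * X := by
      calc 4 * π / n * M ≤ 4 * π / n * (5 * F * (n * X)) := by gcongr
        _ = _ := by field_simp; ring
    have e2 : (1 - X) * F ≤ (1 - X) * S := by
      apply mul_le_mul_of_nonneg_left hlo; linarith
    calc F / π * (1 - (20 * π + 1) * (X + Y)) ≤ F / π * (1 - (20 * π + 1) * X) := by
          gcongr; linarith
      _ = 1 / π * ((1 - X) * F - 20 * π * F * X) := by ring
      _ ≤ _ := by gcongr
  refine ⟨(π * E / F - 1) / (X + Y) / π, ?_, ?_⟩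
  · have c1 : π * E / F ≤ 1 + 2 * (X + Y) := by
      rw [div_le_iff₀ hF]
      calc π * E ≤ π * (F / π * (1 + 2 * (X + Y))) := by gcongr
        _ = _ := by field_simp
    have c2 : 1 - (20 * π + 1) * (X + Y) ≤ π * E / F := by
      rw [le_div_iff₀ hF]
      calc _ = π * (F / π * (1 - (20 * π + 1) * (X + Y))) := by field_simp
        _ ≤ π * E := by gcongr
    have d1 : (π * E / F - 1) / (X + Y) ≤ 2 := by rw [div_le_iff₀ hXY0]; linarith
    have d2 : -(20 * π + 1) ≤ (π * E / F - 1) / (X + Y) := by rw [le_div_iff₀ hXY0]; linarith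
    have h3 := Real.pi_gt_three
    rw [abs_le]
    constructor
    · rw [le_div_iff₀ hpi]; nlinarith [mul_pos hpi hpi, mul_pos (mul_pos hpi hpi) hpi]
    · rw [div_le_iff₀ hpi]; nlinarith [mul_pos hpi hpi, mul_pos (mul_pos hpi hpi) hpi]
  · field_simp
    ring
end

section
/- Let 0<r<1, α>0 and β∈ℝ. Then for every integer n ≥ n₀(α,r,2) one has E_n(C^{α,r}_{β,2})_C = (e^{-α n^r}/√(2παr)) · n^{(1-r)/2} · (1 + γ_n · ( (1/(αr)) n^{-r} + √(αr) · n^{-(1-r)/2} )), where the quantity γ_n = γ_n(α,r,β) satisfies |γ_n| ≤ 392 π^{5/2}. -/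
open MeasureTheory Real Filter
open scoped ENNReal

/-- `n₀(α,r,2)`: the smallest positive integer `n` with
`(1/(αr)) n^{-r} + 2αr n^{-(1-r)} ≤ (1/(3π)³)·(1/2)`. -/
noncomputable def n₀two (α r : ℝ) : ℕ :=
  sInf {n : ℕ | 0 < n ∧
    1 / (α * r) * (n : ℝ) ^ (-r) + 2 * α * r * (n : ℝ) ^ (-(1 - r)) ≤
      (1 / (3 * π) ^ 3) * (1 / 2)}



def KM : ℕ → (ℕ → ℝ) → Prop
  | 0, a => ∀ k, 0 ≤ a k
  | m+1, a => (∀ k, 0 ≤ a k) ∧ KM m (fun k => a k - a (k+1))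

lemma KM.nonneg {m : ℕ} {a : ℕ → ℝ} (h : KM m a) (k : ℕ) : 0 ≤ a k := by
  cases m with
  | zero => exact h k
  | succ m => exact h.1 k

lemma KM.pred {m : ℕ} : ∀ {a : ℕ → ℝ}, KM (m+1) a → KM m a := by
  induction m with
  | zero => intro a h; exact h.1
  | succ m ih => intro a h; exact ⟨h.1, ih h.2⟩

lemma KM.shift {m : ℕ} : ∀ {a : ℕ → ℝ}, KM m a → KM m (fun k => a (k+1)) := by
  induction m with
  | zero => intro a h k; exact h (k+1)
  | succ m ih => intro a h; exact ⟨fun k => h.1 (k+1), ih h.2⟩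

lemma KM.add {m : ℕ} : ∀ {a b : ℕ → ℝ}, KM m a → KM m b → KM m (fun k => a k + b k) := by
  induction m with
  | zero => intro a b h h' k; exact add_nonneg (h k) (h' k)
  | succ m ih =>
    intro a b h h'
    refine ⟨fun k => add_nonneg (h.1 k) (h'.1 k), ?_⟩
    have := ih h.2 h'.2
    convert this using 2
    ring

lemma KM.mul {m : ℕ} : ∀ {a b : ℕ → ℝ}, KM m a → KM m b → KM m (fun k => a k * b k) := by
  induction m with
  | zero => intro a b h h' k; exact mul_nonneg (h k) (h' k)
  | succ m ih =>
    intro a b h h'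
    refine ⟨fun k => mul_nonneg (h.1 k) (h'.1 k), ?_⟩
    have := (ih h.2 h'.pred).add (ih h.shift.pred h'.2)
    convert this using 2
    ring

lemma KM.const {m : ℕ} : ∀ {c : ℝ}, 0 ≤ c → KM m (fun _ => c) := by
  induction m with
  | zero => intro c h k; exact h
  | succ m ih => intro c h; refine ⟨fun _ => h, ?_⟩; simpa using ih le_rfl

lemma KM.pow {m : ℕ} {a : ℕ → ℝ} (h : KM m a) (N : ℕ) : KM m (fun k => a k ^ N) := by
  induction N with
  | zero => simpa using KM.const zero_le_one
  | succ N ih => simpa [pow_succ] using ih.mul h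

lemma KM.lim {m : ℕ} : ∀ {a : ℕ → ℕ → ℝ} {b : ℕ → ℝ}, (∀ N, KM m (a N)) →
    (∀ k, Tendsto (fun N => a N k) atTop (nhds (b k))) → KM m b := by
  induction m with
  | zero => intro a b h h' k; exact ge_of_tendsto' (h' k) (fun N => h N k)
  | succ m ih =>
    intro a b h h'
    refine ⟨fun k => ge_of_tendsto' (h' k) (fun N => (h N).1 k), ?_⟩
    exact ih (fun N => (h N).2) (fun k => (h' k).sub (h' (k+1)))

lemma KM.integral {μ : Measure ℝ} {m : ℕ} : ∀ {g : ℝ → ℕ → ℝ}, (∀ᵐ t ∂μ, KM m (g t)) →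
    (∀ k, Integrable (fun t => g t k) μ) → KM m (fun k => ∫ t, g t k ∂μ) := by
  induction m with
  | zero =>
    intro g h h' k
    exact integral_nonneg_of_ae (by filter_upwards [h] with t ht using ht k)
  | succ m ih =>
    intro g h h'
    refine ⟨fun k => integral_nonneg_of_ae (by filter_upwards [h] with t ht using ht.1 k), ?_⟩
    have := ih (g := fun t k => g t k - g t (k+1)) (by filter_upwards [h] with t ht using ht.2)
      (fun k => (h' k).sub (h' (k+1)))
    convert this using 2 with k
    rw [integral_sub (h' _) (h' _)]

lemma KM.inv {m : ℕ} {b : ℕ → ℝ} (hb : ∀ k, 0 < b k) (h : ∀ m, KM m (fun k => b (k+1) - b k)) :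
    KM m (fun k => (b k)⁻¹) := by
  induction m with
  | zero => intro k; exact (inv_pos.2 (hb k)).le
  | succ m ih =>
    refine ⟨fun k => (inv_pos.2 (hb k)).le, ?_⟩
    have := (ih.mul ih.shift).mul (h m)
    convert this using 2 with k
    have := (hb k).ne'
    have := (hb (k+1)).ne'
    field_simp

lemma KM.rpow_diff {r : ℝ} (hr0 : 0 < r) (hr1 : r < 1) (m : ℕ) :
    KM m (fun k : ℕ => ((k : ℝ) + 1 + 1) ^ r - ((k : ℝ) + 1) ^ r) := by
  have hr : r ∈ Set.Ioo (0:ℝ) 1 := ⟨hr0, hr1⟩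
  set C : ℝ := ∫ t in Set.Ioi 0, rpowIntegrand₀₁ r t 1 with hC
  have hx : ∀ x : ℝ, 0 ≤ x → x ^ r = C⁻¹ * ∫ t in Set.Ioi 0, rpowIntegrand₀₁ r t x := by
    intro x hx
    exact rpow_eq_const_mul_integral hr hx
  have hCpos : 0 ≤ C⁻¹ := by
    apply inv_nonneg.2
    apply setIntegral_nonneg measurableSet_Ioi
    intro t ht
    exact rpowIntegrand₀₁_nonneg hr0 (le_of_lt ht) zero_le_one
  have key : KM m (fun k : ℕ => ∫ t in Set.Ioi (0:ℝ), (rpowIntegrand₀₁ r t ((k:ℝ)+1+1) - rpowIntegrand₀₁ r t ((k:ℝ)+1))) := by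
    apply KM.integral
    · refine (ae_restrict_iff' measurableSet_Ioi).2 (ae_of_all _ fun t ht => ?_)
      have ht : 0 < t := ht
      have h1 : ∀ m, KM m (fun k : ℕ => (t + k + 1)⁻¹) := by
        intro m
        apply KM.inv (b := fun k : ℕ => t + k + 1)
        · intro k; positivity
        · intro m
          have := KM.const (m := m) zero_le_one
          convert this using 2 with k
          push_cast; ring
      have h2 := ((KM.const (m := m) (c := t ^ r) (by positivity)).mul (h1 (m+1)).2)
      convert h2 using 2 with k
      rw [rpowIntegrand₀₁, rpowIntegrand₀₁]
      push_cast
      ring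
    · intro k
      exact (integrableOn_rpowIntegrand₀₁_Ioi hr (by positivity)).sub (integrableOn_rpowIntegrand₀₁_Ioi hr (by positivity))
  have := (KM.const (m := m) hCpos).mul key
  convert this using 2 with k
  rw [integral_sub (integrableOn_rpowIntegrand₀₁_Ioi hr (by positivity)) (integrableOn_rpowIntegrand₀₁_Ioi hr (by positivity)),
    mul_sub, ← hx _ (by positivity), ← hx _ (by positivity)]

lemma KM.expseq {α r : ℝ} (hα : 0 < α) (hr0 : 0 < r) (hr1 : r < 1) (m : ℕ) :
    KM m (fun k : ℕ => Real.exp (-α * ((k : ℝ) + 1) ^ r)) := by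
  apply KM.lim (a := fun N k => ((1 + α * ((k : ℝ) + 1) ^ r / N)⁻¹) ^ N)
  · intro N
    apply KM.pow
    apply KM.inv
    · intro k; positivity
    · intro m
      have := (KM.const (m := m) (c := α / N) (by positivity)).mul (KM.rpow_diff hr0 hr1 m)
      convert this using 2 with k
      push_cast; ring
  · intro k
    have := (Real.tendsto_one_add_div_pow_exp (α * ((k:ℝ)+1)^r)).inv₀ (Real.exp_ne_zero _)
    rw [← Real.exp_neg] at this
    simpa [inv_pow] using this

noncomputable def UM (a : ℕ → ℝ) : ℕ → ℝ := fun k => a (k+1) - a k / 2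

lemma UM_bound : ∀ (m : ℕ) (a : ℕ → ℝ), (∀ m, KM m a) → ∀ k, |(UM^[m] a) k| ≤ (1/2)^m * a k := by
  have hadd : ∀ (m : ℕ) (a b : ℕ → ℝ) (k : ℕ), (UM^[m] (fun k => (a k - b k)/2)) k = ((UM^[m] a) k - (UM^[m] b) k)/2 := by
    intro m
    induction m with
    | zero => intro a b k; simp
    | succ m ih =>
      intro a b k
      rw [Function.iterate_succ_apply, Function.iterate_succ_apply, Function.iterate_succ_apply, ← ih]
      have : UM (fun k => (a k - b k) / 2) = fun k => (UM a k - UM b k) / 2 := by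
        funext k
        simp only [UM]; ring
      rw [this]
  intro m
  induction m with
  | zero => intro a h k; simp [abs_of_nonneg ((h 0) k)]
  | succ m ih =>
    intro a h k
    rw [Function.iterate_succ_apply]
    have e : UM a = fun k => ((fun k => a (k+1)) k - (fun k => a k - a (k+1)) k)/2 := by
      funext k; simp only [UM]; ring
    rw [e, hadd]
    have h1 := abs_le.1 (ih (fun k => a (k+1)) (fun m => (h m).shift) k)
    have h2 := abs_le.1 (ih (fun k => a k - a (k+1)) (fun m => (h (m+1)).2) k)
    rw [pow_succ, abs_le]
    constructor <;> nlinarith [h1.1, h1.2, h2.1, h2.2]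


lemma FM_rec {b : ℕ → ℝ} (hb : Summable fun k => |b k|) {z : ℂ} (hz : ‖z‖ = 1) :
    (∑' k, (b k : ℂ) * z ^ k) * (1 - z / 2) = b 0 + z * ∑' k, (UM b k : ℂ) * z ^ k := by
  have hs : Summable fun k => (b k : ℂ) * z ^ k := by
    apply Summable.of_norm
    simpa [hz] using hb
  have hs1 : Summable fun k => (b (k+1) : ℂ) * z ^ k := by
    apply Summable.of_norm
    simpa [hz] using (summable_nat_add_iff 1).2 hb
  have e : (∑' k, (UM b k : ℂ) * z ^ k) = (∑' k, (b (k+1) : ℂ) * z ^ k) - (∑' k, (b k : ℂ) * z ^ k) / 2 := by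
    rw [← tsum_div_const, ← hs1.tsum_sub (hs.div_const 2)]
    apply tsum_congr
    intro k
    simp only [UM]; push_cast; ring
  have e2 : (∑' k, (b k : ℂ) * z ^ k) = b 0 + z * (∑' k, (b (k+1) : ℂ) * z ^ k) := by
    rw [hs.tsum_eq_zero_add, ← tsum_mul_left]
    simp [pow_succ]
    apply tsum_congr
    intro k; ring
  rw [e, mul_sub]
  linear_combination e2

lemma FM_iter {a : ℕ → ℝ} (ha : Summable a) (hK : ∀ m, KM m a) {z : ℂ} (hz : ‖z‖ = 1) (hz1 : 1 - z / 2 ≠ 0) (M : ℕ) :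
    (∑' k, (a k : ℂ) * z ^ k) = ∑ m ∈ Finset.range M, ((UM^[m] a) 0 : ℂ) * (z / (1 - z/2)) ^ m / (1 - z/2)
      + (z / (1 - z/2)) ^ M * ∑' k, ((UM^[M] a) k : ℂ) * z ^ k := by
  induction M with
  | zero => simp
  | succ M ih =>
    rw [Finset.sum_range_succ, ih]
    have hb : Summable fun k => |(UM^[M] a) k| :=
      Summable.of_nonneg_of_le (fun _ => abs_nonneg _) (UM_bound M a hK) (ha.mul_left _)
    have := FM_rec hb hz
    rw [Function.iterate_succ_apply']
    have h2 : (∑' k, ((UM^[M] a) k : ℂ) * z ^ k) = ((UM^[M] a) 0 : ℂ) / (1 - z/2) + z / (1 - z/2) * ∑' k, (UM (UM^[M] a) k : ℂ) * z ^ k := by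
      rw [eq_div_of_mul_eq hz1 this]
      ring
    rw [h2]
    ring

lemma FM_eq {a : ℕ → ℝ} (ha : Summable a) (hK : ∀ m, KM m a) {z : ℂ} (hz : ‖z‖ = 1) (hz1 : 1 - z / 2 ≠ 0)
    (hw : ‖z / (1 - z/2)‖ < 2) :
    (∑' k, (a k : ℂ) * z ^ k) = (∑' m, ((UM^[m] a) 0 : ℂ) * (z / (1 - z/2)) ^ m) / (1 - z/2) := by
  set w := z / (1 - z/2) with hwdef
  have hq : ‖w‖/2 < 1 := by linarith
  have hs : Summable fun m => ((UM^[m] a) 0 : ℂ) * w ^ m := by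
    apply Summable.of_norm_bounded (g := fun m => a 0 * (‖w‖/2)^m)
    · exact (summable_geometric_of_lt_one (by positivity) hq).mul_left _
    · intro m
      rw [norm_mul, norm_pow, Complex.norm_real, Real.norm_eq_abs]
      calc _ ≤ ((1/2)^m * a 0) * ‖w‖^m := by gcongr; exact UM_bound m a hK 0
        _ = _ := by rw [div_pow, div_pow]; ring
  have hlim : Tendsto (fun M => w ^ M * ∑' k, ((UM^[M] a) k : ℂ) * z ^ k) atTop (nhds 0) := by
    apply squeeze_zero_norm (a := fun M => (‖w‖/2)^M * ∑' k, a k)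
    · intro M
      rw [norm_mul, norm_pow]
      have : ‖∑' k, ((UM^[M] a) k : ℂ) * z ^ k‖ ≤ ∑' k, (1/2)^M * a k := by
        apply tsum_of_norm_bounded (ha.mul_left _).hasSum
        intro k
        simpa [hz] using UM_bound M a hK k
      rw [tsum_mul_left] at this
      calc _ ≤ ‖w‖^M * ((1/2)^M * ∑' k, a k) := by gcongr
        _ = _ := by rw [div_pow, div_pow]; ring
    · simpa using (tendsto_pow_atTop_nhds_zero_of_lt_one (by positivity) hq).mul_const (∑' k, a k)
  have h1 := (hs.div_const (1 - z/2)).hasSum.tendsto_sum_nat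
  have h2 := h1.add hlim
  have h3 : Tendsto (fun _ : ℕ => (∑' k, (a k : ℂ) * z ^ k)) atTop (nhds (∑' k, (a k : ℂ) * z ^ k)) := tendsto_const_nhds
  have h4 := tendsto_nhds_unique h3 (h2.congr (fun M => (FM_iter ha hK hz hz1 M).symm))
  rw [h4, tsum_div_const, add_zero]

lemma HM_diff {a : ℕ → ℝ} (hK : ∀ m, KM m a) {w : ℂ} (hw : ‖w‖ < 2) :
    AnalyticAt ℂ (fun w : ℂ => ∑' m, ((UM^[m] a) 0 : ℂ) * w ^ m) w := by
  obtain ⟨ρ, h1, h2⟩ := exists_between hw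
  have hρ : 0 < ρ := lt_of_le_of_lt (norm_nonneg _) h1
  have : DifferentiableOn ℂ (fun w : ℂ => ∑' m, ((UM^[m] a) 0 : ℂ) * w ^ m) (Metric.ball 0 ρ) := by
    apply Complex.differentiableOn_tsum_of_summable_norm (u := fun m => a 0 * (ρ/2)^m)
    · exact (summable_geometric_of_lt_one (by positivity) (by linarith)).mul_left _
    · intro i; fun_prop
    · exact Metric.isOpen_ball
    · intro m w hw
      have hw : ‖w‖ ≤ ρ := by simpa using le_of_lt (mem_ball_zero_iff.1 hw)
      rw [norm_mul, norm_pow, Complex.norm_real, Real.norm_eq_abs]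
      calc _ ≤ ((1/2)^m * a 0) * ρ^m := by
            gcongr
            · exact mul_nonneg (by positivity) ((hK 0) 0)
            · exact UM_bound m a hK 0
        _ = _ := by rw [div_pow, div_pow]; ring
  exact this.analyticAt (Metric.isOpen_ball.mem_nhds (by simpa using h1))

lemma kernel_analytic {a : ℕ → ℝ} (ha : Summable a) (hK : ∀ m, KM m a) (θ : ℝ) :
    AnalyticOnNhd ℝ (fun t : ℝ => ∑' k : ℕ, a k * Real.cos (((k:ℝ)+1) * t - θ)) (Set.Ioo 0 (2*π)) := by
  have hnz : ∀ z : ℂ, ‖z‖ = 1 → 1 - z/2 ≠ 0 := by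
    intro z hz h
    have : z = 2 := by linear_combination -2 * h
    rw [this] at hz; norm_num at hz
  have hw : ∀ t ∈ Set.Ioo 0 (2*π), ‖Complex.exp (t * Complex.I) / (1 - Complex.exp (t * Complex.I)/2)‖ < 2 := by
    intro t ht
    have h1 : ‖Complex.exp (t * Complex.I)‖ = 1 := Complex.norm_exp_ofReal_mul_I t
    rw [norm_div, h1, div_lt_iff₀ (norm_pos_iff.2 (hnz _ h1))]
    have hc : Real.cos t < 1 := by
      refine lt_of_le_of_ne (Real.cos_le_one t) fun h => ?_
      rw [Real.cos_eq_one_iff] at h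
      obtain ⟨n, hn⟩ := h
      have h0 := ht.1; have h2 := ht.2
      rw [← hn] at h0 h2
      have hp := Real.pi_pos
      have : (0:ℝ) < n := by by_contra hh; push Not at hh; nlinarith
      have h3 : (n:ℝ) < 1 := by by_contra hh; push Not at hh; nlinarith
      norm_cast at this h3
      omega
    have h3 : Complex.normSq (1 - Complex.exp (t * Complex.I)/2) = 5/4 - Real.cos t := by
      have hs := Real.sin_sq_add_cos_sq t
      rw [Complex.exp_mul_I, ← Complex.ofReal_cos, ← Complex.ofReal_sin, Complex.normSq_apply]
      simp only [Complex.sub_re, Complex.sub_im, Complex.one_re, Complex.one_im, Complex.div_ofNat_re, Complex.div_ofNat_im, Complex.add_re, Complex.add_im, Complex.ofReal_re, Complex.ofReal_im, Complex.re_ofReal_mul, Complex.im_ofReal_mul, Complex.I_re, Complex.I_im]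
      nlinarith
    have h4 : ‖1 - Complex.exp (t * Complex.I)/2‖^2 = 5/4 - Real.cos t := by
      rw [← Complex.normSq_eq_norm_sq, h3]
    nlinarith [norm_nonneg (1 - Complex.exp (t * Complex.I)/2)]
  have hana : AnalyticOnNhd ℝ (fun t : ℝ => (Complex.exp (-θ * Complex.I) * Complex.exp (t * Complex.I) * ((∑' m, ((UM^[m] a) 0 : ℂ) * (Complex.exp (t * Complex.I) / (1 - Complex.exp (t * Complex.I)/2)) ^ m) / (1 - Complex.exp (t * Complex.I)/2))).re) (Set.Ioo 0 (2*π)) := by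
    intro t ht
    have h1 : ‖Complex.exp (t * Complex.I)‖ = 1 := Complex.norm_exp_ofReal_mul_I t
    have A0 : AnalyticAt ℂ (fun s : ℂ => Complex.exp (s * Complex.I)) (t:ℂ) := by fun_prop
    have A1 : AnalyticAt ℂ (fun s : ℂ => 1 - Complex.exp (s * Complex.I)/2) (t:ℂ) := by fun_prop
    have A2 : AnalyticAt ℂ (fun s : ℂ => Complex.exp (s * Complex.I) / (1 - Complex.exp (s * Complex.I)/2)) (t:ℂ) :=
      A0.fun_div A1 (hnz _ h1)
    have A3 : AnalyticAt ℂ (fun s : ℂ => ∑' m, ((UM^[m] a) 0 : ℂ) * (Complex.exp (s * Complex.I) / (1 - Complex.exp (s * Complex.I)/2)) ^ m) (t:ℂ) :=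
      AnalyticAt.fun_comp (f := fun s : ℂ => Complex.exp (s * Complex.I) / (1 - Complex.exp (s * Complex.I)/2)) (HM_diff hK (hw t ht)) A2
    have A4 := ((analyticAt_const (v := Complex.exp (-θ * Complex.I))).fun_mul A0).fun_mul (A3.fun_div A1 (hnz _ h1))
    have A5 := (A4.restrictScalars (𝕜 := ℝ)).fun_comp (f := fun s : ℝ => (s:ℂ)) (Complex.ofRealCLM.analyticAt t)
    exact (Complex.reCLM.analyticAt _).fun_comp A5
  refine hana.congr isOpen_Ioo ?_
  intro t ht
  have h1 : ‖Complex.exp (t * Complex.I)‖ = 1 := Complex.norm_exp_ofReal_mul_I t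
  simp only
  rw [← FM_eq ha hK h1 (hnz _ h1) (hw t ht), ← tsum_mul_left, Complex.re_tsum]
  · apply tsum_congr
    intro k
    have : Complex.exp (-θ * Complex.I) * Complex.exp (t * Complex.I) * ((a k : ℂ) * Complex.exp (t * Complex.I) ^ k)
        = (a k : ℂ) * Complex.exp (((((k:ℝ)+1) * t - θ : ℝ) : ℂ) * Complex.I) := by
      rw [← Complex.exp_nat_mul, ← Complex.exp_add]
      rw [mul_left_comm, ← Complex.exp_add]
      congr 2
      push_cast; ring
    rw [this, Complex.re_ofReal_mul, Complex.exp_ofReal_mul_I_re]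
  · apply Summable.mul_left
    apply Summable.of_norm
    simpa [h1] using ha.abs

lemma kernel_null {a : ℕ → ℝ} (ha : Summable a) (hK : ∀ m, KM m a) (θ : ℝ)
    (hne : ¬ Set.EqOn (fun t : ℝ => ∑' k : ℕ, a k * Real.cos (((k:ℝ)+1) * t - θ)) 0 (Set.Ioo 0 (2*π))) (x : ℝ) :
    ∀ᵐ t, (∑' k : ℕ, a k * Real.cos (((k:ℝ)+1) * (x - t) - θ)) ≠ 0 := by
  set K := (fun t : ℝ => ∑' k : ℕ, a k * Real.cos (((k:ℝ)+1) * t - θ)) with hKdef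
  have h1 := ((kernel_analytic ha hK θ).eqOn_zero_or_eventually_ne_zero_of_preconnected isPreconnected_Ioo).resolve_left hne
  have h2 : ∀ᵐ t ∂(volume.restrict (Set.Ioo 0 (2*π))), K t ≠ 0 := ae_restrict_le_codiscreteWithin measurableSet_Ioo h1
  have h3 : ∀ᵐ t, t ∈ Set.Ioc 0 (2*π) → K t ≠ 0 := by
    rw [restrict_Ioo_eq_restrict_Ioc, ae_restrict_iff' measurableSet_Ioc] at h2
    exact h2
  have hper : ∀ (t : ℝ) (j : ℤ), K (t - j * (2*π)) = K t := by
    intro t j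
    simp only [hKdef]
    apply tsum_congr
    intro k
    congr 1
    rw [← Real.cos_sub_int_mul_two_pi (((k:ℝ)+1)*t - θ) ((k+1)*j)]
    congr 1
    push_cast; ring
  have h4 : ∀ᵐ t, ∀ j : ℤ, (x - t - j * (2*π)) ∈ Set.Ioc 0 (2*π) → K (x - t - j * (2*π)) ≠ 0 := by
    rw [ae_all_iff]
    intro j
    have q : Measure.QuasiMeasurePreserving (fun t : ℝ => x - j * (2*π) - t) volume volume :=
      (volume.measurePreserving_sub_left _).quasiMeasurePreserving
    have := q.ae h3
    filter_upwards [this] with t ht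
    rwa [sub_right_comm]
  filter_upwards [h4] with t ht
  have hp := Real.two_pi_pos
  have := ht (toIocDiv hp 0 (x - t))
  rw [hper] at this
  apply this
  have := sub_toIocDiv_zsmul_mem_Ioc hp 0 (x - t)
  simpa using this


lemma exp_rpow_tendsto {c r : ℝ} (hc : 0 < c) (hr : 0 < r) (s : ℝ) :
    Tendsto (fun k : ℕ => Real.exp (-c * (k:ℝ) ^ r) * (k:ℝ) ^ s) atTop (nhds 0) := by
  have h1 := tendsto_rpow_mul_exp_neg_mul_atTop_nhds_zero (s / r) c hc
  have h2 : Tendsto (fun k : ℕ => (k:ℝ) ^ r) atTop atTop :=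
    (tendsto_rpow_atTop hr).comp tendsto_natCast_atTop_atTop
  have h3 := h1.comp h2
  refine h3.congr fun k => ?_
  simp only [Function.comp]
  rw [← Real.rpow_mul (by positivity), mul_div_cancel₀ _ hr.ne', mul_comm]

lemma summable_exp_rpow {c r : ℝ} (hc : 0 < c) (hr : 0 < r) :
    Summable (fun k : ℕ => Real.exp (-c * (k:ℝ) ^ r)) := by
  have h1 : Summable (fun k : ℕ => 1 / (k:ℝ) ^ 2) := Real.summable_one_div_nat_pow.2 (by norm_num)
  refine summable_of_isBigO_nat h1 ?_
  apply Asymptotics.IsBigO.of_bound 1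
  have h2 := (exp_rpow_tendsto hc hr 2).eventually (gt_mem_nhds zero_lt_one)
  filter_upwards [h2, eventually_gt_atTop 0] with k hk hk0
  have : (0:ℝ) < k := by exact_mod_cast hk0
  rw [Real.norm_of_nonneg (by positivity), Real.norm_of_nonneg (by positivity), one_mul, le_div_iff₀ (by positivity)]
  have e : (k:ℝ) ^ (2:ℝ) = (k:ℝ)^2 := by norm_cast
  rw [e] at hk
  exact hk.le

lemma sum_bounds {c r : ℝ} (hc : 0 < c) (hr0 : 0 < r) (hr1 : r < 1) {n : ℕ} (hn : 0 < n)
    (hq : (n:ℝ) ^ (-r) / (c * r) ≤ 1) :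
    let S := ∑' k : ℕ, Real.exp (-c * ((k + n : ℕ):ℝ) ^ r)
    let G := Real.exp (-c * (n:ℝ) ^ r) * (n:ℝ) ^ (1 - r) / (c * r)
    G ≤ S ∧ (1 - (n:ℝ) ^ (-r) / (c * r)) * (S - Real.exp (-c * (n:ℝ) ^ r)) ≤ G := by
  intro S G
  set q := (n:ℝ) ^ (-r) / (c * r) with hqdef
  let h : ℝ → ℝ := fun x => Real.exp (-c * x ^ r)
  let g : ℝ → ℝ := fun x => h x * x ^ (1 - r) / (c * r)
  have hn' : (0:ℝ) < n := by exact_mod_cast hn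
  have hderiv : ∀ x : ℝ, 0 < x → HasDerivAt g (-(h x * (1 - (1-r) * x ^ (-r) / (c * r)))) x := by
    intro x hx
    have d1 : HasDerivAt (fun x : ℝ => x ^ r) (r * x ^ (r-1)) x := Real.hasDerivAt_rpow_const (Or.inl hx.ne')
    have d2 : HasDerivAt (fun x : ℝ => x ^ (1-r)) ((1-r) * x ^ (1-r-1)) x := Real.hasDerivAt_rpow_const (Or.inl hx.ne')
    have d3 := (d1.const_mul (-c)).exp
    have d4 := (d3.mul d2).div_const (c*r)
    have d5 : HasDerivAt g _ x := d4
    refine d5.congr_deriv ?_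
    symm
    have e1 : x ^ (1-r-1) = x ^ (-r) := by congr 1; ring
    have e2 : x ^ (r-1) * x ^ (1-r) = 1 := by rw [← Real.rpow_add hx]; simp
    rw [e1, eq_div_iff (by positivity)]
    simp only [h]
    field_simp
    linear_combination (c * r) * e2
  have hmono : ∀ x y : ℝ, 0 < x → x ≤ y → h y ≤ h x := by
    intro x y hx hxy
    apply Real.exp_le_exp.2
    have := Real.rpow_le_rpow hx.le hxy hr0.le
    nlinarith
  have hstep : ∀ k : ℕ, (1 - q) * h ((k + 1 + n : ℕ)) ≤ g ((k+n : ℕ)) - g ((k+1+n : ℕ)) ∧ g ((k+n : ℕ)) - g ((k+1+n : ℕ)) ≤ h ((k+n:ℕ)) := by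
    intro k
    have hk : (0:ℝ) < (k+n:ℕ) := by exact_mod_cast (by omega)
    have hkn : (n:ℝ) ≤ (k+n:ℕ) := by exact_mod_cast (by omega)
    have e : ((k+1+n:ℕ):ℝ) = (k+n:ℕ) + 1 := by push_cast; ring
    rw [e]
    set x : ℝ := ((k+n:ℕ):ℝ)
    obtain ⟨ξ, hξ, hE⟩ := exists_hasDerivAt_eq_slope g (fun x => -(h x * (1 - (1-r) * x ^ (-r) / (c * r)))) (show x < x+1 by linarith)
      (fun y hy => (hderiv y (by linarith [hy.1])).continuousAt.continuousWithinAt)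
      (fun y hy => hderiv y (by linarith [hy.1]))
    have hξ0 : 0 < ξ := by linarith [hξ.1]
    have e2 : g x - g (x+1) = h ξ * (1 - (1-r) * ξ ^ (-r) / (c * r)) := by
      rw [add_sub_cancel_left, div_one] at hE
      linarith
    rw [e2]
    have hξp : 0 < ξ ^ (-r) := by positivity
    have b1 : ξ ^ (-r) ≤ (n:ℝ) ^ (-r) := Real.rpow_le_rpow_of_nonpos hn' (by linarith [hξ.1]) (by linarith)
    have b2 : (1-r) * ξ ^ (-r) / (c * r) ≤ q := by
      rw [hqdef]
      gcongr
      nlinarith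
    have b3 : 0 ≤ (1-r) * ξ ^ (-r) / (c * r) := by
      have : 0 < 1 - r := by linarith
      positivity
    have b4 := hmono ξ (x+1) hξ0 hξ.2.le
    have b5 := hmono x ξ hk hξ.1.le
    have b6 : 0 < h (x+1) := Real.exp_pos _
    have b7 : 0 < h ξ := Real.exp_pos _
    constructor
    · nlinarith
    · nlinarith
  have hlim : Tendsto (fun k : ℕ => g ((k+n:ℕ))) atTop (nhds 0) := by
    have := ((exp_rpow_tendsto hc hr0 (1-r)).div_const (c*r)).comp (tendsto_add_atTop_nat n)
    rw [zero_div] at this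
    exact this
  have hsum : Summable (fun k : ℕ => h ((k+n:ℕ))) := (summable_nat_add_iff n).2 (summable_exp_rpow hc hr0)
  have htel : ∀ N, ∑ k ∈ Finset.range N, (g ((k+n : ℕ)) - g ((k+1+n : ℕ))) = g n - g ((N+n:ℕ)) := by
    intro N
    rw [Finset.sum_range_sub' (fun k : ℕ => g ((k+n:ℕ)))]
    simp
  have htel2 : Tendsto (fun N => ∑ k ∈ Finset.range N, (g ((k+n : ℕ)) - g ((k+1+n : ℕ)))) atTop (nhds (g n)) := by
    simp_rw [htel]
    simpa using hlim.const_sub (g n)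
  constructor
  · exact le_of_tendsto_of_tendsto' htel2 hsum.hasSum.tendsto_sum_nat (fun N => Finset.sum_le_sum fun k _ => (hstep k).2)
  · have hsum1 : Summable (fun k : ℕ => h ((k+1+n:ℕ))) := (summable_nat_add_iff 1).2 hsum
    have e : S - Real.exp (-c * (n:ℝ) ^ r) = ∑' k : ℕ, h ((k+1+n:ℕ)) := by
      have : S = h ((0+n:ℕ)) + ∑' k : ℕ, h ((k+1+n:ℕ)) := hsum.tsum_eq_zero_add
      rw [this]; simp [h]
    rw [e, ← tsum_mul_left]
    exact le_of_tendsto_of_tendsto' (hsum1.mul_left (1-q)).hasSum.tendsto_sum_nat htel2 (fun N => Finset.sum_le_sum fun k _ => (hstep k).1)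

/-- final numeric piece -/
lemma final_est {α r : ℝ} (hα : 0 < α) (hr0 : 0 < r) (hr1 : r < 1) {n : ℕ} (hn : 0 < n)
    (hc : 1 / (α * r) * (n : ℝ) ^ (-r) + 2 * α * r * (n : ℝ) ^ (-(1 - r)) ≤ (1 / (3 * π) ^ 3) * (1 / 2)) :
    ∃ γ : ℝ, |γ| ≤ 392 * π ^ ((5 : ℝ) / 2) ∧
      Real.sqrt ((∑' k : ℕ, Real.exp (-(2*α) * ((k + n : ℕ):ℝ) ^ r)) / π) =
          Real.exp (-α * (n : ℝ) ^ r) / Real.sqrt (2 * π * α * r) * (n : ℝ) ^ ((1 - r) / 2) *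
            (1 + γ * (1 / (α * r) * (n : ℝ) ^ (-r) +
              Real.sqrt (α * r) * (n : ℝ) ^ (-((1 - r) / 2)))) := by
  have hn' : (0:ℝ) < n := by exact_mod_cast hn
  set A := 1 / (α * r) * (n : ℝ) ^ (-r) with hA
  set R := Real.sqrt (α * r) * (n : ℝ) ^ (-((1 - r) / 2)) with hR
  have hApos : 0 < A := by positivity
  have hRpos : 0 < R := by positivity
  have hR2 : R ^ 2 = α * r * (n:ℝ) ^ (-(1-r)) := by
    rw [hR, mul_pow, Real.sq_sqrt (by positivity), ← Real.rpow_natCast, ← Real.rpow_mul hn'.le]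
    congr 2; push_cast; ring
  have hc1 : A + 2 * R^2 ≤ 1/2 := by
    have : (1 / (3 * π) ^ 3) * (1 / 2) ≤ 1/2 := by
      have : 1 ≤ (3*π)^3 := one_le_pow₀ (by linarith [Real.pi_gt_three])
      have : 1 / (3 * π) ^ 3 ≤ 1 := by rw [div_le_one (by positivity)]; exact this
      linarith
    rw [hR2]; linarith
  set S := (∑' k : ℕ, Real.exp (-(2*α) * ((k + n : ℕ):ℝ) ^ r)) with hS
  set G := Real.exp (-(2*α) * (n:ℝ) ^ r) * (n:ℝ) ^ (1 - r) / (2*α * r) with hG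
  have hq : (n:ℝ) ^ (-r) / (2*α * r) = A/2 := by rw [hA]; field_simp
  obtain ⟨h1, h2⟩ := sum_bounds (c := 2*α) (by positivity) hr0 hr1 hn (by rw [hq]; nlinarith)
  rw [hq] at h2
  change G ≤ S at h1
  change (1 - A/2) * (S - Real.exp (-(2*α) * (n:ℝ) ^ r)) ≤ G at h2
  have hGpos : 0 < G := by positivity
  have hexp : Real.exp (-(2*α) * (n:ℝ) ^ r) = 2 * R^2 * G := by
    rw [hR2, hG]
    have : (n:ℝ) ^ (-(1-r)) * (n:ℝ) ^ (1-r) = 1 := by rw [← Real.rpow_add hn']; simp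
    field_simp
    linear_combination -this
  rw [hexp] at h2
  have h3 : S ≤ (1 + A + 2*R^2) * G := by
    have hR2n := sq_nonneg R
    have : (1 - A/2) * S ≤ (1 - A/2) * ((1 + A + 2*R^2) * G) := by nlinarith [mul_pos hApos hGpos, mul_pos (mul_pos hApos hGpos) hApos]
    exact le_of_mul_le_mul_left this (by nlinarith)
  set M := Real.exp (-α * (n : ℝ) ^ r) / Real.sqrt (2 * π * α * r) * (n : ℝ) ^ ((1 - r) / 2) with hM
  have hMpos : 0 < M := by positivity
  have hM2 : M^2 = G / π := by
    rw [hM, mul_pow, div_pow, Real.sq_sqrt (by positivity), ← Real.rpow_natCast (_ ^ _), ← Real.rpow_mul hn'.le, ← Real.exp_nat_mul, hG]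
    have e1 : (1 - r) / 2 * ((2:ℕ):ℝ) = 1 - r := by push_cast; ring
    have e2 : ((2:ℕ):ℝ) * (-α * (n:ℝ)^r) = -(2*α) * (n:ℝ)^r := by push_cast; ring
    rw [e1, e2]
    field_simp
  have hpi := Real.pi_pos
  set E := Real.sqrt (S/π) with hE
  have hE1 : M ≤ E := Real.le_sqrt_of_sq_le (by rw [hM2]; gcongr)
  have hE2 : E ≤ M * (1 + (A + R)) := by
    apply Real.sqrt_le_iff.2 ⟨by positivity, ?_⟩
    rw [mul_pow, hM2]
    have : S / π ≤ (1 + A + 2*R^2) * (G/π) := by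
      rw [← mul_div_assoc]; gcongr
    refine this.trans ?_
    rw [mul_comm]
    have hR1 : R ≤ 1 := by nlinarith
    have : 0 < G / π := by positivity
    gcongr
    nlinarith
  refine ⟨(E / M - 1) / (A + R), ?_, ?_⟩
  · have g1 : 1 ≤ E / M := by rwa [le_div_iff₀ hMpos, one_mul]
    have g2 : E / M ≤ 1 + (A + R) := by rw [div_le_iff₀ hMpos]; linarith
    have g3 : |(E / M - 1) / (A + R)| ≤ 1 := by
      rw [abs_of_nonneg (div_nonneg (by linarith) (by positivity)), div_le_one (by positivity)]
      linarith
    have g4 : 1 ≤ π ^ ((5:ℝ)/2) := Real.one_le_rpow (by linarith [Real.pi_gt_three]) (by norm_num)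
    linarith
  · field_simp
    ring

lemma n0_spec {α r : ℝ} (hα : 0 < α) (hr0 : 0 < r) (hr1 : r < 1) (n : ℕ)
    (hn : sInf {n : ℕ | 0 < n ∧
    1 / (α * r) * (n : ℝ) ^ (-r) + 2 * α * r * (n : ℝ) ^ (-(1 - r)) ≤
      (1 / (3 * π) ^ 3) * (1 / 2)} ≤ n) : 0 < n ∧
    1 / (α * r) * (n : ℝ) ^ (-r) + 2 * α * r * (n : ℝ) ^ (-(1 - r)) ≤
      (1 / (3 * π) ^ 3) * (1 / 2) := by
  have hne : {n : ℕ | 0 < n ∧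
    1 / (α * r) * (n : ℝ) ^ (-r) + 2 * α * r * (n : ℝ) ^ (-(1 - r)) ≤
      (1 / (3 * π) ^ 3) * (1 / 2)}.Nonempty := by
    have t1 : Tendsto (fun n : ℕ => (n:ℝ) ^ (-r)) atTop (nhds 0) :=
      (tendsto_rpow_neg_atTop hr0).comp tendsto_natCast_atTop_atTop
    have t2 : Tendsto (fun n : ℕ => (n:ℝ) ^ (-(1-r))) atTop (nhds 0) :=
      (tendsto_rpow_neg_atTop (by linarith : 0 < 1 - r)).comp tendsto_natCast_atTop_atTop
    have t3 := (t1.const_mul (1/(α*r))).add (t2.const_mul (2*α*r))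
    rw [mul_zero, mul_zero, add_zero] at t3
    have hp : 0 < (1 / (3 * π) ^ 3) * (1 / 2) := by positivity
    obtain ⟨N, h1, h2⟩ := ((t3.eventually (gt_mem_nhds hp)).and (eventually_gt_atTop 0)).exists
    exact ⟨N, h2, h1.le⟩
  obtain ⟨h1, h2⟩ := Nat.sInf_mem hne
  set N := sInf {n : ℕ | 0 < n ∧
    1 / (α * r) * (n : ℝ) ^ (-r) + 2 * α * r * (n : ℝ) ^ (-(1 - r)) ≤
      (1 / (3 * π) ^ 3) * (1 / 2)}
  have hN : (0:ℝ) < N := by exact_mod_cast h1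
  have hNn : (N:ℝ) ≤ n := by exact_mod_cast hn
  refine ⟨by omega, le_trans ?_ h2⟩
  have := Real.rpow_le_rpow_of_nonpos hN hNn (by linarith : -r ≤ 0)
  have := Real.rpow_le_rpow_of_nonpos hN hNn (by linarith : -(1-r) ≤ 0)
  gcongr


lemma cosint {c : ℤ} (hc : c ≠ 0) (u : ℝ) : ∫ t in (-π)..π, Real.cos (c * t - u) = 0 := by
  have hc' : (c:ℝ) ≠ 0 := by exact_mod_cast hc
  rw [intervalIntegral.integral_comp_mul_sub (fun x => Real.cos x) hc', integral_cos]
  have : (c:ℝ) * π - u = (c * (-π) - u) + c * (2*π) := by ring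
  rw [this, Real.sin_add_int_mul_two_pi]
  simp

lemma orth (k j : ℕ) (h : k + j ≠ 0) (u v : ℝ) :
    ∫ t in (-π)..π, Real.cos (k * t - u) * Real.cos (j * t - v) = if k = j then π * Real.cos (u - v) else 0 := by
  have e : ∀ t : ℝ, Real.cos (k * t - u) * Real.cos (j * t - v) =
      (1/2) * Real.cos (((k:ℤ) - (j:ℤ) : ℤ) * t - (u - v)) + (1/2) * Real.cos (((k:ℤ) + (j:ℤ) : ℤ) * t - (u + v)) := by
    intro t
    have h1 := Real.cos_add (k * t - u) (j * t - v)
    have h2 := Real.cos_sub (k * t - u) (j * t - v)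
    have e1 : (((k:ℤ) - (j:ℤ) : ℤ) : ℝ) * t - (u - v) = (k * t - u) - (j * t - v) := by push_cast; ring
    have e2 : (((k:ℤ) + (j:ℤ) : ℤ) : ℝ) * t - (u + v) = (k * t - u) + (j * t - v) := by push_cast; ring
    rw [e1, e2, h1, h2]; ring
  simp_rw [e]
  rw [intervalIntegral.integral_add (Continuous.intervalIntegrable (by fun_prop) _ _) (Continuous.intervalIntegrable (by fun_prop) _ _),
    intervalIntegral.integral_const_mul, intervalIntegral.integral_const_mul, cosint (by omega : (k:ℤ) + j ≠ 0)]
  split_ifs with hkj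
  · subst hkj
    simp
    rw [← Real.cos_neg (u - v), neg_sub]
    ring
  · rw [cosint (by omega : (k:ℤ) - j ≠ 0)]; simp

lemma orth_term (k j : ℕ) (p q v : ℝ) :
    ∫ t in (-π)..π, (p * Real.cos (((k:ℝ)+1) * t) + q * Real.sin (((k:ℝ)+1) * t)) * Real.cos (j * t - v)
     = if k + 1 = j then π * (p * Real.cos v + q * Real.sin v) else 0 := by
  have e : ∀ t : ℝ, (p * Real.cos (((k:ℝ)+1) * t) + q * Real.sin (((k:ℝ)+1) * t)) * Real.cos (j * t - v) =
      p * (Real.cos ((k+1:ℕ) * t - 0) * Real.cos (j * t - v)) + q * (Real.cos ((k+1:ℕ) * t - π/2) * Real.cos (j * t - v)) := by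
    intro t
    rw [Real.cos_sub_pi_div_two, sub_zero]
    push_cast; ring
  simp_rw [e]
  rw [intervalIntegral.integral_add (Continuous.intervalIntegrable (by fun_prop) _ _) (Continuous.intervalIntegrable (by fun_prop) _ _),
    intervalIntegral.integral_const_mul, intervalIntegral.integral_const_mul, orth _ _ (by omega), orth _ _ (by omega)]
  split_ifs
  · rw [zero_sub, Real.cos_neg, Real.cos_pi_div_two_sub]; ring
  · simp

lemma term_bound {p q s : ℝ} (hp : |p| ≤ s) (hq : |q| ≤ s) (x : ℝ) : |p * Real.cos x + q * Real.sin x| ≤ 2 * s := by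
  have h1 : |p * Real.cos x| ≤ s := by
    rw [abs_mul]; nlinarith [Real.abs_cos_le_one x, abs_nonneg p, abs_nonneg (Real.cos x)]
  have h2 : |q * Real.sin x| ≤ s := by
    rw [abs_mul]; nlinarith [Real.abs_sin_le_one x, abs_nonneg q, abs_nonneg (Real.sin x)]
  have := abs_add_le (p * Real.cos x) (q * Real.sin x)
  linarith

lemma series_coef {p q s : ℕ → ℝ} (hs : Summable s) (hp : ∀ k, |p k| ≤ s k) (hq : ∀ k, |q k| ≤ s k)
    {f : ℝ → ℝ} {A : ℝ}
    (hf : ∀ x, f x = A / 2 + ∑' k : ℕ, (p k * Real.cos (((k:ℝ)+1) * x) + q k * Real.sin (((k:ℝ)+1) * x)))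
    (j : ℕ) (v : ℝ) :
    ∫ t in (-π)..π, f t * Real.cos (j * t - v) =
      (∫ t in (-π)..π, A / 2 * Real.cos (j * t - v)) + ∑' k : ℕ, if k + 1 = j then π * (p k * Real.cos v + q k * Real.sin v) else 0 := by
  have hcont : Continuous fun x : ℝ => ∑' k : ℕ, (p k * Real.cos (((k:ℝ)+1) * x) + q k * Real.sin (((k:ℝ)+1) * x)) := by
    apply continuous_tsum (u := fun k => 2 * s k)
    · intro k; fun_prop
    · exact hs.mul_left 2
    · intro k x; exact term_bound (hp k) (hq k) _
  have hsum : ∀ x : ℝ, Summable fun k : ℕ => (p k * Real.cos (((k:ℝ)+1) * x) + q k * Real.sin (((k:ℝ)+1) * x)) := by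
    intro x
    exact Summable.of_norm_bounded (hs.mul_left 2) (fun k => term_bound (hp k) (hq k) _)
  have h := intervalIntegral.hasSum_integral_of_dominated_convergence (μ := volume) (a := -π) (b := π)
    (F := fun (k : ℕ) (t : ℝ) => (p k * Real.cos (((k:ℝ)+1) * t) + q k * Real.sin (((k:ℝ)+1) * t)) * Real.cos (j * t - v))
    (f := fun t => (∑' k : ℕ, (p k * Real.cos (((k:ℝ)+1) * t) + q k * Real.sin (((k:ℝ)+1) * t))) * Real.cos (j * t - v))
    (fun k _ => 2 * s k)
    (fun k => Continuous.aestronglyMeasurable (by fun_prop))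
    (fun k => ae_of_all _ fun t _ => by
      rw [norm_mul]
      have h1 := term_bound (hp k) (hq k) (((k:ℝ)+1) * t)
      have h2 := Real.abs_cos_le_one (j * t - v)
      rw [Real.norm_eq_abs, Real.norm_eq_abs]
      nlinarith [abs_nonneg (p k * Real.cos (((k:ℝ)+1) * t) + q k * Real.sin (((k:ℝ)+1) * t))])
    (ae_of_all _ fun t _ => hs.mul_left 2)
    (by simp)
    (ae_of_all _ fun t _ => (hsum t).hasSum.mul_right _)
  simp_rw [orth_term] at h
  rw [h.tsum_eq, ← intervalIntegral.integral_add (Continuous.intervalIntegrable (by fun_prop) _ _)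
    (Continuous.intervalIntegrable (by fun_prop) _ _)]
  apply intervalIntegral.integral_congr
  intro t _
  simp only [hf t]
  ring

lemma series_fourierSum {p q s : ℕ → ℝ} (hs : Summable s) (hp : ∀ k, |p k| ≤ s k) (hq : ∀ k, |q k| ≤ s k)
    {f : ℝ → ℝ} {A : ℝ}
    (hf : ∀ x, f x = A / 2 + ∑' k : ℕ, (p k * Real.cos (((k:ℝ)+1) * x) + q k * Real.sin (((k:ℝ)+1) * x)))
    (m : ℕ) (x : ℝ) :
    fourierSum m f x = A / 2 + ∑ k ∈ Finset.range m, (p k * Real.cos (((k:ℝ)+1) * x) + q k * Real.sin (((k:ℝ)+1) * x)) := by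
  have hpi := Real.pi_ne_zero
  have h0 : fourierCoefA f 0 = A := by
    have := series_coef hs hp hq hf 0 0
    simp at this
    simp [fourierCoefA, this]
    field_simp
    ring
  have hgen : ∀ (k : ℕ) (v : ℝ), ∫ t in (-π)..π, f t * Real.cos ((k+1:ℕ) * t - v) = π * (p k * Real.cos v + q k * Real.sin v) := by
    intro k v
    rw [series_coef hs hp hq hf (k+1) v, intervalIntegral.integral_const_mul]
    have := cosint (c := ((k+1:ℕ):ℤ)) (by omega) v
    rw [Int.cast_natCast] at this
    rw [this, mul_zero, zero_add, tsum_eq_single k]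
    · simp
    · intro j hj; rw [if_neg (by omega)]
  have hA : ∀ k : ℕ, fourierCoefA f (k+1) = p k := by
    intro k
    have := hgen k 0
    simp only [sub_zero, Real.cos_zero, Real.sin_zero, mul_zero, mul_one, add_zero] at this
    rw [fourierCoefA, this]; field_simp
  have hB : ∀ k : ℕ, fourierCoefB f (k+1) = q k := by
    intro k
    have := hgen k (π/2)
    simp only [Real.cos_sub_pi_div_two, Real.cos_pi_div_two, Real.sin_pi_div_two, mul_zero, mul_one, zero_add] at this
    rw [fourierCoefB, this]; field_simp
  rw [fourierSum, h0]
  congr 1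
  induction m with
  | zero => simp
  | succ m ih =>
    rw [Finset.sum_Icc_succ_top (by omega), Finset.sum_range_succ, ih, hA, hB]
    push_cast
    rfl


lemma conv_hasSum {a : ℕ → ℝ} (ha : Summable a) (ha0 : ∀ k, 0 ≤ a k) (θ : ℝ) {φ : ℝ → ℝ}
    (hφ : IntervalIntegrable φ volume (-π) π) (x : ℝ) :
    HasSum (fun k : ℕ => a k * ∫ t in (-π)..π, Real.cos (((k:ℝ)+1) * (x - t) - θ) * φ t)
      (∫ t in (-π)..π, (∑' k : ℕ, a k * Real.cos (((k:ℝ)+1) * (x - t) - θ)) * φ t) := by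
  have hb : ∀ (k : ℕ) (y : ℝ), ‖a k * Real.cos y‖ ≤ a k := by
    intro k y
    rw [norm_mul, Real.norm_eq_abs, Real.norm_eq_abs, abs_of_nonneg (ha0 k)]
    nlinarith [Real.abs_cos_le_one y, ha0 k]
  have h := intervalIntegral.hasSum_integral_of_dominated_convergence (μ := volume) (a := -π) (b := π)
    (F := fun (k : ℕ) (t : ℝ) => a k * Real.cos (((k:ℝ)+1) * (x - t) - θ) * φ t)
    (f := fun t => (∑' k : ℕ, a k * Real.cos (((k:ℝ)+1) * (x - t) - θ)) * φ t)
    (fun k t => a k * ‖φ t‖)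
    (fun k => (Continuous.aestronglyMeasurable (by fun_prop)).mul hφ.aestronglyMeasurable_restrict_uIoc)
    (fun k => ae_of_all _ fun t _ => by
      rw [norm_mul]
      gcongr
      exact hb k _)
    (ae_of_all _ fun t _ => ha.mul_right _)
    (by simp_rw [tsum_mul_right]; exact hφ.norm.const_mul _)
    (ae_of_all _ fun t _ => (Summable.of_norm_bounded ha (fun k => hb k _)).hasSum.mul_right _)
  refine h.congr_fun ?_
  intro k
  rw [← intervalIntegral.integral_const_mul]
  simp_rw [mul_assoc]

lemma dev_hasSum {a : ℕ → ℝ} (ha : Summable a) (ha0 : ∀ k, 0 ≤ a k) (θ : ℝ) {φ : ℝ → ℝ}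
    (hφ : IntervalIntegrable φ volume (-π) π) {f : ℝ → ℝ} {A : ℝ}
    (hf : ∀ x, f x = A / 2 + (1 / π) * ∫ t in (-π)..π, (∑' k : ℕ, a k * Real.cos (((k:ℝ)+1) * (x - t) - θ)) * φ t)
    (m : ℕ) (x : ℝ) :
    HasSum (fun k : ℕ => (1/π) * (a (k+m) * ∫ t in (-π)..π, Real.cos ((((k+m:ℕ):ℝ)+1) * (x - t) - θ) * φ t))
      (f x - fourierSum m f x) := by
  set p : ℕ → ℝ := fun k => (1/π) * (a k * ∫ t in (-π)..π, Real.cos (((k:ℝ)+1) * t + θ) * φ t) with hp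
  set q : ℕ → ℝ := fun k => (1/π) * (a k * ∫ t in (-π)..π, Real.sin (((k:ℝ)+1) * t + θ) * φ t) with hq
  have hpi := Real.pi_pos
  have hbd : ∀ g : ℝ → ℝ, (∀ t, |g t| ≤ 1) → |∫ t in (-π)..π, g t * φ t| ≤ ∫ t in (-π)..π, |φ t| := by
    intro g hg
    rw [← Real.norm_eq_abs]
    apply intervalIntegral.norm_integral_le_of_norm_le (by linarith) _ hφ.abs
    refine ae_of_all _ fun t _ => ?_
    rw [norm_mul, Real.norm_eq_abs, Real.norm_eq_abs]
    nlinarith [hg t, abs_nonneg (φ t)]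
  have hcI : ∀ g : ℝ → ℝ, Continuous g → IntervalIntegrable (fun t => g t * φ t) volume (-π) π := by
    intro g hg
    exact hφ.continuousOn_mul hg.continuousOn
  have hs : Summable fun k => (1/π) * (a k * ∫ t in (-π)..π, |φ t|) := (ha.mul_right _).mul_left _
  have hpb : ∀ k, |p k| ≤ (1/π) * (a k * ∫ t in (-π)..π, |φ t|) := by
    intro k
    simp only [hp]
    rw [abs_mul, abs_mul, abs_of_nonneg (ha0 k), abs_of_pos (by positivity : 0 < 1/π)]
    gcongr
    · exact ha0 k
    · exact hbd _ (fun t => Real.abs_cos_le_one _)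
  have hqb : ∀ k, |q k| ≤ (1/π) * (a k * ∫ t in (-π)..π, |φ t|) := by
    intro k
    simp only [hq]
    rw [abs_mul, abs_mul, abs_of_nonneg (ha0 k), abs_of_pos (by positivity : 0 < 1/π)]
    gcongr
    · exact ha0 k
    · exact hbd _ (fun t => Real.abs_sin_le_one _)
  have hterm : ∀ (k : ℕ) (x : ℝ), (1/π) * (a k * ∫ t in (-π)..π, Real.cos (((k:ℝ)+1) * (x - t) - θ) * φ t) =
      p k * Real.cos (((k:ℝ)+1) * x) + q k * Real.sin (((k:ℝ)+1) * x) := by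
    intro k x
    have e : ∀ t : ℝ, Real.cos (((k:ℝ)+1) * (x - t) - θ) * φ t =
        Real.cos (((k:ℝ)+1) * x) * (Real.cos (((k:ℝ)+1) * t + θ) * φ t) + Real.sin (((k:ℝ)+1) * x) * (Real.sin (((k:ℝ)+1) * t + θ) * φ t) := by
      intro t
      have : ((k:ℝ)+1) * (x - t) - θ = ((k:ℝ)+1) * x - (((k:ℝ)+1) * t + θ) := by ring
      rw [this, Real.cos_sub]; ring
    simp_rw [e]
    rw [intervalIntegral.integral_add ((hcI _ (by fun_prop)).const_mul _) ((hcI _ (by fun_prop)).const_mul _),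
      intervalIntegral.integral_const_mul, intervalIntegral.integral_const_mul]
    simp only [hp, hq]
    ring
  have hH : ∀ x : ℝ, HasSum (fun k : ℕ => p k * Real.cos (((k:ℝ)+1) * x) + q k * Real.sin (((k:ℝ)+1) * x))
      ((1 / π) * ∫ t in (-π)..π, (∑' k : ℕ, a k * Real.cos (((k:ℝ)+1) * (x - t) - θ)) * φ t) := by
    intro x
    have := (conv_hasSum ha ha0 θ hφ x).mul_left (1/π)
    simpa only [hterm] using this
  have hf2 : ∀ x, f x = A / 2 + ∑' k : ℕ, (p k * Real.cos (((k:ℝ)+1) * x) + q k * Real.sin (((k:ℝ)+1) * x)) := by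
    intro x
    rw [(hH x).tsum_eq, hf x]
  rw [series_fourierSum hs hpb hqb hf2 m x, hf x]
  simp_rw [hterm]
  have := (hasSum_nat_add_iff' m).2 (hH x)
  rw [add_sub_add_left_eq_sub]
  exact this

lemma T_sq (a : ℕ → ℝ) (θ x : ℝ) (m N : ℕ) :
    ∫ t in (-π)..π, (∑ k ∈ Finset.range N, a (k+m) * Real.cos ((((k+m:ℕ):ℝ)+1) * (x - t) - θ))^2 =
      π * ∑ k ∈ Finset.range N, a (k+m)^2 := by
  have e : ∀ t : ℝ, (∑ k ∈ Finset.range N, a (k+m) * Real.cos ((((k+m:ℕ):ℝ)+1) * (x - t) - θ))^2 =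
      ∑ k ∈ Finset.range N, ∑ j ∈ Finset.range N, (a (k+m) * a (j+m)) * (Real.cos ((k+m+1:ℕ) * t - ((((k+m:ℕ):ℝ)+1) * x - θ)) * Real.cos ((j+m+1:ℕ) * t - ((((j+m:ℕ):ℝ)+1) * x - θ))) := by
    intro t
    have e2 : ∀ k : ℕ, Real.cos ((((k+m:ℕ):ℝ)+1) * (x - t) - θ) = Real.cos ((k+m+1:ℕ) * t - ((((k+m:ℕ):ℝ)+1) * x - θ)) := by
      intro k
      rw [← Real.cos_neg]
      congr 1
      push_cast; ring
    simp_rw [e2]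
    rw [pow_two, Finset.sum_mul_sum]
    refine Finset.sum_congr rfl fun k _ => Finset.sum_congr rfl fun j _ => ?_
    ring
  simp_rw [e]
  rw [intervalIntegral.integral_finsetSum (fun k _ => Continuous.intervalIntegrable (by fun_prop) _ _), Finset.mul_sum]
  refine Finset.sum_congr rfl fun k hk => ?_
  rw [intervalIntegral.integral_finsetSum (fun k _ => Continuous.intervalIntegrable (by fun_prop) _ _)]
  rw [Finset.sum_eq_single k]
  · rw [intervalIntegral.integral_const_mul, orth _ _ (by omega), if_pos rfl, sub_self, Real.cos_zero]
    ring
  · intro j _ hj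
    rw [intervalIntegral.integral_const_mul, orth _ _ (by omega), if_neg (by omega), mul_zero]
  · intro h; exact absurd hk h

lemma dev_upper {a : ℕ → ℝ} (ha : Summable a) (ha0 : ∀ k, 0 < a k) (θ : ℝ) {φ : ℝ → ℝ}
    (hφ : IntervalIntegrable φ volume (-π) π) (hφ2 : IntervalIntegrable (fun t => φ t ^ 2) volume (-π) π)
    (hφ1 : ∫ t in (-π)..π, φ t ^ 2 ≤ 1) {f : ℝ → ℝ} {A : ℝ}
    (hf : ∀ x, f x = A / 2 + (1 / π) * ∫ t in (-π)..π, (∑' k : ℕ, a k * Real.cos (((k:ℝ)+1) * (x - t) - θ)) * φ t)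
    (m : ℕ) (x : ℝ) (hsq : Summable fun k => a (k+m)^2) :
    |f x - fourierSum m f x| ≤ Real.sqrt ((∑' k, a (k+m)^2) / π) := by
  have hpi := Real.pi_pos
  have h := (dev_hasSum ha (fun k => (ha0 k).le) θ hφ hf m x).tendsto_sum_nat.abs
  refine le_of_tendsto' h fun N => ?_
  set T : ℝ → ℝ := fun t => ∑ k ∈ Finset.range N, a (k+m) * Real.cos ((((k+m:ℕ):ℝ)+1) * (x - t) - θ) with hT
  have hTc : Continuous T := by simp only [hT]; fun_prop
  set S := ∑' k, a (k+m)^2 with hS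
  have hSpos : 0 < S := hsq.tsum_pos (fun k => sq_nonneg _) 0 (by have := ha0 (0+m); positivity)
  have e : ∑ k ∈ Finset.range N, (1/π) * (a (k+m) * ∫ t in (-π)..π, Real.cos ((((k+m:ℕ):ℝ)+1) * (x - t) - θ) * φ t) = (1/π) * ∫ t in (-π)..π, T t * φ t := by
    rw [← Finset.mul_sum]
    congr 1
    simp only [hT]
    simp_rw [Finset.sum_mul]
    rw [intervalIntegral.integral_finsetSum]
    · refine Finset.sum_congr rfl fun k _ => ?_
      rw [← intervalIntegral.integral_const_mul]
      simp_rw [mul_assoc]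
    · intro k _
      exact hφ.continuousOn_mul (Continuous.continuousOn (by fun_prop))
  rw [e]
  have hTS : ∫ t in (-π)..π, T t ^ 2 ≤ π * S := by
    simp only [hT]
    rw [T_sq]
    gcongr
    exact hsq.sum_le_tsum _ (fun _ _ => sq_nonneg _)
  set c := Real.sqrt (π * S) with hc
  have hcpos : 0 < c := Real.sqrt_pos.2 (by positivity)
  have hc2 : c^2 = π * S := Real.sq_sqrt (by positivity)
  have hTi : IntervalIntegrable (fun t => T t ^ 2) volume (-π) π := Continuous.intervalIntegrable (by fun_prop) _ _
  have hb : |∫ t in (-π)..π, T t * φ t| ≤ c := by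
    rw [← Real.norm_eq_abs]
    calc ‖∫ t in (-π)..π, T t * φ t‖ ≤ ∫ t in (-π)..π, ((1/(2*c)) * T t ^ 2 + (c/2) * φ t ^ 2) := by
          apply intervalIntegral.norm_integral_le_of_norm_le (by linarith) _ ((hTi.const_mul _).add (hφ2.const_mul _))
          refine ae_of_all _ fun t _ => ?_
          rw [norm_mul, Real.norm_eq_abs, Real.norm_eq_abs, ← sq_abs (T t), ← sq_abs (φ t)]
          have : 0 ≤ (1/(2*c)) * (|T t| - c * |φ t|)^2 := by positivity
          have e2 : (1/(2*c)) * (|T t| - c * |φ t|)^2 = (1/(2*c)) * |T t|^2 + (c/2) * |φ t|^2 - |T t| * |φ t| := by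
            field_simp; ring
          linarith
      _ = (1/(2*c)) * (∫ t in (-π)..π, T t ^ 2) + (c/2) * ∫ t in (-π)..π, φ t ^ 2 := by
          rw [intervalIntegral.integral_add (hTi.const_mul _) (hφ2.const_mul _), intervalIntegral.integral_const_mul, intervalIntegral.integral_const_mul]
      _ ≤ (1/(2*c)) * c^2 + (c/2) * 1 := by rw [hc2]; gcongr
      _ = c := by field_simp; ring
  apply Real.le_sqrt_of_sq_le
  rw [sq_abs, mul_pow, ← sq_abs (∫ t in (-π)..π, T t * φ t)]
  calc (1/π)^2 * |∫ t in (-π)..π, T t * φ t|^2 ≤ (1/π)^2 * c^2 := by gcongr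
    _ = S/π := by rw [hc2]; field_simp


lemma cos_orth' (k j : ℕ) (θ : ℝ) :
    ∫ t in (-π)..π, Real.cos (((k:ℝ)+1) * (0 - t) - θ) * Real.cos (((j:ℝ)+1) * (0 - t) - θ) = if k = j then π else 0 := by
  have e : ∀ (k : ℕ) (t : ℝ), Real.cos (((k:ℝ)+1) * (0 - t) - θ) = Real.cos ((k+1:ℕ) * t - (-θ)) := by
    intro k t
    rw [← Real.cos_neg]; congr 1; push_cast; ring
  simp_rw [e]
  rw [orth _ _ (by omega)]
  simp

lemma cos_per (k : ℕ) (θ x t : ℝ) : Real.cos (((k:ℝ)+1) * (x - (t + 2*π)) - θ) = Real.cos (((k:ℝ)+1) * (x - t) - θ) := by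
  rw [← Real.cos_sub_nat_mul_two_pi (((k:ℝ)+1) * (x - t) - θ) (k+1)]
  congr 1
  push_cast; ring

lemma kernel_ne {a : ℕ → ℝ} (ha : Summable a) (ha0 : ∀ k, 0 < a k) (θ : ℝ) :
    ¬ Set.EqOn (fun t : ℝ => ∑' k : ℕ, a k * Real.cos (((k:ℝ)+1) * t - θ)) 0 (Set.Ioo 0 (2*π)) := by
  intro h
  have h1 := conv_hasSum ha (fun k => (ha0 k).le) θ (φ := fun t => Real.cos ((((0:ℕ):ℝ)+1) * (0 - t) - θ))
    (Continuous.intervalIntegrable (by fun_prop) _ _) 0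
  simp_rw [cos_orth'] at h1
  have h2 : HasSum (fun k : ℕ => a k * if k = 0 then π else 0) (a 0 * π) := by
    have := hasSum_single (f := fun k : ℕ => a k * if k = 0 then π else 0) 0 (fun k hk => by simp [hk])
    simpa using this
  have h3 := h1.unique h2
  have hper : Function.Periodic (fun t : ℝ => (∑' k : ℕ, a k * Real.cos (((k:ℝ)+1) * (0 - t) - θ)) * Real.cos ((((0:ℕ):ℝ)+1) * (0 - t) - θ)) (2*π) := by
    intro t
    simp only [cos_per]
  have h4 := hper.intervalIntegral_add_eq (-π) (-(2*π))
  have e1 : -π + 2*π = π := by ring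
  have e2 : -(2*π) + 2*π = 0 := by ring
  rw [e1, e2] at h4
  rw [h4] at h3
  have h5 : ∫ t in (-(2*π))..0, (∑' k : ℕ, a k * Real.cos (((k:ℝ)+1) * (0 - t) - θ)) * Real.cos ((((0:ℕ):ℝ)+1) * (0 - t) - θ) = 0 := by
    rw [intervalIntegral.integral_of_le (by linarith [Real.pi_pos]), integral_Ioc_eq_integral_Ioo]
    apply setIntegral_eq_zero_of_forall_eq_zero
    intro t ht
    have := h (show 0 - t ∈ Set.Ioo 0 (2*π) from ⟨by linarith [ht.2], by linarith [ht.1]⟩)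
    simp only [Pi.zero_apply] at this
    rw [this, zero_mul]
  rw [h5] at h3
  have := mul_pos (ha0 0) Real.pi_pos
  linarith

lemma L2_iff {φ : ℝ → ℝ} {μ : Measure ℝ} (h : MemLp φ 2 μ) : eLpNorm φ 2 μ ≤ 1 ↔ ∫ t, φ t ^ 2 ∂μ ≤ 1 := by
  rw [h.eLpNorm_eq_integral_rpow_norm (by norm_num) (by norm_num)]
  have e : ∀ t, ‖φ t‖ ^ (2:ℝ≥0∞).toReal = φ t ^ 2 := by
    intro t
    simp
  simp_rw [e]
  rw [← ENNReal.ofReal_one, ENNReal.ofReal_le_ofReal_iff zero_le_one]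
  have hn : 0 ≤ ∫ t, φ t ^ 2 ∂μ := integral_nonneg fun t => sq_nonneg _
  constructor
  · intro h
    by_contra hh
    push Not at hh
    have := Real.one_lt_rpow hh (show (0:ℝ) < (2:ℝ≥0∞).toReal⁻¹ by simp)
    linarith
  · intro h
    exact Real.rpow_le_one hn h (by simp)

lemma aq_summable {α r : ℝ} (hα : 0 < α) (hr0 : 0 < r) : Summable (fun k : ℕ => Real.exp (-α * ((k:ℝ)+1) ^ r)) := by
  have := (summable_nat_add_iff 1).2 (summable_exp_rpow hα hr0)
  simpa using this

lemma class_upper {α r β : ℝ} (hα : 0 < α) (hr0 : 0 < r) (hr1 : r < 1) {f : ℝ → ℝ}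
    (hf : f ∈ poissonClass α r β 2) (m : ℕ) (x : ℝ) :
    |f x - fourierSum m f x| ≤ Real.sqrt ((∑' k : ℕ, Real.exp (-α * (((k+m:ℕ):ℝ)+1) ^ r)^2) / π) := by
  obtain ⟨hfp, A, φ, hφp, hφn, hφ0, hfx⟩ := hf
  have hpi := Real.pi_pos
  have ha := aq_summable hα hr0
  have ha0 : ∀ k : ℕ, 0 < Real.exp (-α * ((k:ℝ)+1) ^ r) := fun k => Real.exp_pos _
  have hsq : Summable fun k : ℕ => Real.exp (-α * (((k+m:ℕ):ℝ)+1) ^ r)^2 := by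
    have h2 : Summable fun k : ℕ => Real.exp (-α * ((k:ℝ)+1) ^ r)^2 := by
      refine (aq_summable (α := 2*α) (by positivity) hr0).congr fun k => ?_
      rw [← Real.exp_nat_mul]; congr 1; push_cast; ring
    exact (summable_nat_add_iff m).2 h2
  have hsh : ∀ g : ℝ → ℝ, Function.Periodic g (2*π) → ∫ t in (-π)..π, g t = ∫ t in (0:ℝ)..(2*π), g t := by
    intro g hg
    have h4 := hg.intervalIntegral_add_eq (-π) 0
    have e1 : -π + 2*π = π := by ring
    rwa [e1, zero_add] at h4
  by_cases hm : AEStronglyMeasurable φ (volume.restrict (Set.Ioc (0:ℝ) (2*π)))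
  · have hL : MemLp φ 2 (volume.restrict (Set.Ioc (0:ℝ) (2*π))) := ⟨hm, hφn.trans_lt (by simp)⟩
    have hi : IntervalIntegrable φ volume 0 (2*π) :=
      (intervalIntegrable_iff_integrableOn_Ioc_of_le (by positivity)).2 (hL.integrable (by norm_num))
    have hi2 : IntervalIntegrable (fun t => φ t^2) volume 0 (2*π) :=
      (intervalIntegrable_iff_integrableOn_Ioc_of_le (by positivity)).2 hL.integrable_sq
    have hφp2 : Function.Periodic (fun t => φ t^2) (2*π) := fun t => by simp only [hφp t]
    have hφp1 : Function.Periodic φ (2*π) := hφp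
    have hi' : IntervalIntegrable φ volume (-π) π := hφp1.intervalIntegrable₀ (by positivity) hi _ _
    have hi2' : IntervalIntegrable (fun t => φ t^2) volume (-π) π := hφp2.intervalIntegrable₀ (by positivity) hi2 _ _
    have hn1 : ∫ t in (-π)..π, φ t^2 ≤ 1 := by
      rw [hsh _ hφp2, intervalIntegral.integral_of_le (by positivity)]
      exact (L2_iff hL).1 hφn
    exact dev_upper ha ha0 (β * π / 2) hi' hi2' hn1 hfx m x hsq
  · have hz : ∀ x, ∫ t in (-π)..π, genPoissonKernel α r β (x - t) * φ t = 0 := by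
      intro x
      rw [hsh]
      · rw [intervalIntegral.integral_of_le (by positivity)]
        apply integral_undef
        intro hI
        apply hm
        have hK := kernel_null ha (KM.expseq hα hr0 hr1) (β * π / 2) (kernel_ne ha ha0 _) x
        have hKm : Measurable fun t => genPoissonKernel α r β (x - t) := by
          unfold genPoissonKernel
          apply Continuous.measurable
          apply continuous_tsum (u := fun k : ℕ => Real.exp (-α * ((k:ℝ)+1) ^ r))
          · intro k; fun_prop
          · exact ha
          · intro k t
            rw [norm_mul, Real.norm_eq_abs, Real.norm_eq_abs, abs_of_pos (ha0 k)]
            nlinarith [ha0 k, Real.abs_cos_le_one (((k : ℝ) + 1) * (x - t) - β * π / 2)]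
        refine (hKm.inv.aestronglyMeasurable.mul hI.aestronglyMeasurable).congr ?_
        filter_upwards [ae_restrict_of_ae hK] with t ht
        have ht' : genPoissonKernel α r β (x - t) ≠ 0 := ht
        simp only [Pi.mul_apply, Pi.inv_apply]
        field_simp
      · intro t
        simp only [genPoissonKernel, cos_per, hφp t]
    exact dev_upper ha ha0 (β * π / 2) (φ := fun _ => 0) (by simp) (by simp) (by simp) (A := A)
      (f := f) (fun x => by rw [hfx x, hz x]; simp) m x hsq

lemma class_lower {α r : ℝ} (β : ℝ) (hα : 0 < α) (hr0 : 0 < r) (m N : ℕ) (hN : 0 < N) :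
    ∃ f ∈ poissonClass α r β 2, f 0 - fourierSum m f 0 =
      Real.sqrt ((∑ k ∈ Finset.range N, Real.exp (-α * (((k+m:ℕ):ℝ)+1) ^ r)^2) / π) := by
  have hpi := Real.pi_pos
  have ha := aq_summable hα hr0
  set a : ℕ → ℝ := fun k => Real.exp (-α * ((k:ℝ)+1) ^ r) with hadef
  have ha0 : ∀ k : ℕ, 0 < a k := fun k => Real.exp_pos _
  change ∃ f ∈ poissonClass α r β 2, f 0 - fourierSum m f 0 = Real.sqrt ((∑ k ∈ Finset.range N, a (k+m)^2) / π)
  set S := ∑ k ∈ Finset.range N, a (k+m)^2 with hS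
  have hSpos : 0 < S := Finset.sum_pos (fun k _ => pow_pos (ha0 _) 2) (by simpa using hN.ne')
  set c := Real.sqrt (π * S) with hc
  have hcpos : 0 < c := Real.sqrt_pos.2 (by positivity)
  have hc2 : c^2 = π * S := Real.sq_sqrt (by positivity)
  set θ := β * π / 2 with hθ
  set T : ℝ → ℝ := fun t => ∑ k ∈ Finset.range N, a (k+m) * Real.cos ((((k+m:ℕ):ℝ)+1) * (0 - t) - θ) with hT
  have hTc : Continuous T := by simp only [hT]; fun_prop
  have hTp : Function.Periodic T (2*π) := by
    intro t
    simp only [hT, cos_per]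
  set φ : ℝ → ℝ := fun t => (1/c) * T t with hφ
  have hφc : Continuous φ := by simp only [hφ]; fun_prop
  have hφp : Function.Periodic φ (2*π) := fun t => by simp only [hφ, hTp t]
  have hsh : ∀ g : ℝ → ℝ, Function.Periodic g (2*π) → ∫ t in (-π)..π, g t = ∫ t in (0:ℝ)..(2*π), g t := by
    intro g hg
    have h4 := hg.intervalIntegral_add_eq (-π) 0
    have e1 : -π + 2*π = π := by ring
    rwa [e1, zero_add] at h4
  set f : ℝ → ℝ := fun x => 0 / 2 + (1 / π) * ∫ t in (-π)..π, genPoissonKernel α r β (x - t) * φ t with hf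
  refine ⟨f, ⟨?_, 0, φ, hφp, ?_, ?_, fun x => rfl⟩, ?_⟩
  · intro x
    have hper : ∀ t, genPoissonKernel α r β (x + 2*π - t) = genPoissonKernel α r β (x - t) := by
      intro t
      simp only [genPoissonKernel]
      apply tsum_congr
      intro k
      rw [← cos_per k (β * π/2) (x + 2*π) t]
      congr 3
      ring
    simp only [hf, hper]
  · have hL : MemLp φ 2 (volume.restrict (Set.Ioc (0:ℝ) (2*π))) := by
      rw [memLp_two_iff_integrable_sq hφc.aestronglyMeasurable]
      exact (Continuous.intervalIntegrable (by fun_prop : Continuous fun t => φ t^2) 0 (2*π)).1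
    rw [L2_iff hL, ← intervalIntegral.integral_of_le (by positivity), ← hsh _ (fun t => by simp only [hφp t])]
    simp only [hφ, mul_pow]
    rw [intervalIntegral.integral_const_mul]
    simp only [hT]
    rw [T_sq, ← hS, ← hc2]
    field_simp
    exact le_rfl
  · rw [← hsh _ hφp]
    simp only [hφ, hT]
    rw [intervalIntegral.integral_const_mul, intervalIntegral.integral_finsetSum (fun k _ => Continuous.intervalIntegrable (by fun_prop) _ _)]
    rw [Finset.sum_eq_zero, mul_zero]
    intro k _
    rw [intervalIntegral.integral_const_mul]
    have := cosint (c := (k+m+1:ℕ)) (by omega) (-θ)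
    have e : ∀ t : ℝ, Real.cos ((((k+m:ℕ):ℝ)+1) * (0 - t) - θ) = Real.cos (((k+m+1:ℕ):ℤ) * t - (-θ)) := by
      intro t
      rw [← Real.cos_neg]; congr 1; push_cast; ring
    simp_rw [e]
    rw [this, mul_zero]
  · have h := dev_hasSum ha (fun k => (ha0 k).le) θ (Continuous.intervalIntegrable hφc _ _) (f := f) (A := 0) (fun x => rfl) m 0
    have hterm : ∀ k : ℕ, ∫ t in (-π)..π, Real.cos ((((k+m:ℕ):ℝ)+1) * (0 - t) - θ) * φ t = if k ∈ Finset.range N then a (k+m) * π / c else 0 := by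
      intro k
      have e : ∀ t : ℝ, Real.cos ((((k+m:ℕ):ℝ)+1) * (0 - t) - θ) * φ t = ∑ j ∈ Finset.range N, (a (j+m) / c) * (Real.cos ((((k+m:ℕ):ℝ)+1) * (0 - t) - θ) * Real.cos ((((j+m:ℕ):ℝ)+1) * (0 - t) - θ)) := by
        intro t
        simp only [hφ, hT, Finset.mul_sum]
        refine Finset.sum_congr rfl fun j _ => ?_
        ring
      simp_rw [e]
      rw [intervalIntegral.integral_finsetSum (fun k _ => Continuous.intervalIntegrable (by fun_prop) _ _)]
      simp_rw [intervalIntegral.integral_const_mul, cos_orth']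
      have : ∀ j, (if k + m = j + m then π else 0) = if k = j then π else 0 := by
        intro j; simp
      simp only [this, mul_ite, mul_zero, Finset.sum_ite_eq]
      split_ifs <;> ring
    simp_rw [hterm] at h
    have h2 : HasSum (fun k : ℕ => (1/π) * (a (k+m) * if k ∈ Finset.range N then a (k+m) * π / c else 0)) (∑ k ∈ Finset.range N, (1/π) * (a (k+m) * if k ∈ Finset.range N then a (k+m) * π / c else 0)) :=
      hasSum_sum_of_ne_finset_zero (fun k hk => by rw [if_neg hk]; simp)
    rw [h.unique h2]
    have h3 : ∑ k ∈ Finset.range N, (1/π) * (a (k+m) * if k ∈ Finset.range N then a (k+m) * π / c else 0) = S / c := by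
      rw [hS, Finset.sum_div]
      refine Finset.sum_congr rfl fun k hk => ?_
      rw [if_pos hk]; field_simp
    rw [h3]
    symm
    rw [Real.sqrt_eq_iff_mul_self_eq (by positivity) (by positivity), div_mul_div_comm, ← pow_two c, hc2]
    field_simp

lemma EnC_eq {α r : ℝ} (β : ℝ) (hα : 0 < α) (hr0 : 0 < r) (hr1 : r < 1) {n : ℕ} (hn : 0 < n) :
    EnC α r β 2 n = Real.sqrt ((∑' k : ℕ, Real.exp (-(2*α) * ((k + n : ℕ):ℝ) ^ r)) / π) := by
  obtain ⟨m, rfl⟩ : ∃ m, n = m + 1 := ⟨n - 1, by omega⟩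
  have e0 : ∀ k : ℕ, Real.exp (-(2*α) * ((k + (m+1) : ℕ):ℝ) ^ r) = Real.exp (-α * (((k+m:ℕ):ℝ)+1) ^ r)^2 := by
    intro k
    rw [← Real.exp_nat_mul]; congr 1; push_cast; rw [add_assoc]; ring
  simp_rw [e0]
  have hsq : Summable fun k : ℕ => Real.exp (-α * (((k+m:ℕ):ℝ)+1) ^ r)^2 := by
    simp_rw [← e0]
    exact (summable_nat_add_iff (m+1)).2 (summable_exp_rpow (by positivity : 0 < 2*α) hr0)
  set B := Real.sqrt ((∑' k : ℕ, Real.exp (-α * (((k+m:ℕ):ℝ)+1) ^ r)^2) / π) with hB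
  have hB0 : 0 ≤ B := Real.sqrt_nonneg _
  have hu1 : ∀ f ∈ poissonClass α r β 2, ∀ x, |f x - fourierSum m f x| ≤ B := fun f hf x => class_upper hα hr0 hr1 hf m x
  have hu2 : ∀ f : ℝ → ℝ, (⨆ (_ : f ∈ poissonClass α r β 2), ⨆ x : ℝ, |f x - fourierSum m f x|) ≤ B := by
    intro f
    exact Real.iSup_le (fun hf => Real.iSup_le (hu1 f hf) hB0) hB0
  rw [EnC]
  simp only [Nat.add_sub_cancel]
  apply le_antisymm
  · exact Real.iSup_le hu2 hB0
  · have hlim : Tendsto (fun N => Real.sqrt ((∑ k ∈ Finset.range N, Real.exp (-α * (((k+m:ℕ):ℝ)+1) ^ r)^2) / π)) atTop (nhds B) :=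
      (hsq.hasSum.tendsto_sum_nat.div_const π).sqrt
    refine le_of_tendsto hlim ?_
    filter_upwards [eventually_gt_atTop 0] with N hN
    obtain ⟨f, hf, hfe⟩ := class_lower β hα hr0 m N hN
    rw [← hfe]
    refine le_trans (le_abs_self _) ?_
    refine le_trans ?_ (le_ciSup ⟨B, by rintro _ ⟨f, rfl⟩; exact hu2 f⟩ f)
    simp only [hf, ciSup_unique]
    exact le_ciSup (f := fun x : ℝ => |f x - fourierSum m f x|) ⟨B, by rintro _ ⟨x, rfl⟩; exact hu1 f hf x⟩ 0

theorem statement3 (α r β : ℝ)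
    (hr0 : 0 < r) (hr1 : r < 1) (hα : 0 < α) :
    ∀ n : ℕ, n₀two α r ≤ n →
      ∃ γ : ℝ, |γ| ≤ 392 * π ^ ((5 : ℝ) / 2) ∧
        EnC α r β 2 n =
          Real.exp (-α * (n : ℝ) ^ r) / Real.sqrt (2 * π * α * r) * (n : ℝ) ^ ((1 - r) / 2) *
            (1 + γ * (1 / (α * r) * (n : ℝ) ^ (-r) +
              Real.sqrt (α * r) * (n : ℝ) ^ (-((1 - r) / 2)))) := by
  intro n hn
  obtain ⟨hn0, hc⟩ := n0_spec hα hr0 hr1 n hn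
  rw [EnC_eq β hα hr0 hr1 hn0]
  exact final_est hα hr0 hr1 hn0 hc
end
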